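/- Let q be a prime power, let A be a subset of F_q with |A| ≥ 2, let d be an integer with 2 ≤ d ≤ |A| and d dividing q-1, and let χ_d be a multiplicative character of F_q of order d with complex values (extended by χ_d(0) = 0). Define S(d;q,A) = Σ_{γ ∈ F_q \ A} Π_{α ∈ A} ((d-1) - Σ_{j=1}^{d-1} χ_d((γ - α)^j)). Then S(d;q,A) is a real number and S(d;q,A) ≥ (d-1)^{|A|} (q - (2^{|A|-1}(|A|-2) + 1)√q - 2^{|A|} |A|). -/

import Mathlib

open Finset

/-!
Expanding `∏_{α ∈ A} ((d - 1) - t(γ - α))`, where `t` is the sum of the nontrivial powers of `χ`,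
over the subsets `B ⊆ A` reduces the theorem to Weil's bound
`|∑_γ ∏_{a ∈ s} χ(γ - a) ^ e a| ≤ (#s - 1) √q` for `0 < e a < d`.

The sums of `∏ χ(g(-a)) ^ e a` over the monic polynomials `g` of degree `n` vanish for `n ≥ #s`, so
they are the coefficients of a polynomial `L` of degree less than `#s`. By Newton's identities, the
analogous character sums over the extension of `F_q` of degree `n`, with `χ` composed with the norm,
are minus the `n`-th power sums of the reciprocal roots of `L`. Hence it is enough to bound the sums
over the extensions of degree `2m` by `O(q ^ m)`.

This is done by Stepanov's method. Put `f = ∏ (X - a) ^ e a` and let `E` be an extension of order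
`B ^ 2` with `B = q ^ m = d b + 1`. The value of `χ` at the norm of `f(γ)` determines
`c = f(γ) ^ (b (B + 1))`. The Frobenius map `γ ↦ γ ^ B` of `E` interchanges the values of `X` and
`X ^ B` and, on the fibre of `c`, sends `f ^ b` to `c f ^ (-b)`. Linear algebra therefore produces
`H ≠ 0` such that `H(f ^ b, X ^ B, X)` is of low degree and vanishes on the fibre. It is a nonzero
polynomial because `U ^ d - f(X) / f(Y)` is irreducible by Kummer theory once the common divisor of
`d` and the exponents `e a` has been absorbed into `χ`. The bounds from above for the cardinality of
all the fibres bound the character sum, since the `d`-th roots of unity have sum zero.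
-/

section Kummer

open Polynomial

variable {L : Type*} [Field L]

theorem exists_pow_eq_of_coprime_of_pow_eq_pow {a w : L} {m n : ℕ} (ha : a ≠ 0)
    (hmn : m.Coprime n) (h : w ^ m = a ^ n) : ∃ v, v ^ m = a := by
  refine ⟨a ^ m.gcdA n * w ^ m.gcdB n, ?_⟩
  have hbezout : (m * m.gcdA n + n * m.gcdB n : ℤ) = 1 := by
    rw [← Nat.gcd_eq_gcd_ab, hmn, Nat.cast_one]
  calc (a ^ m.gcdA n * w ^ m.gcdB n) ^ m
      = (a ^ m) ^ m.gcdA n * (w ^ m) ^ m.gcdB n := by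
        rw [mul_pow, ← zpow_natCast, ← zpow_natCast, ← zpow_natCast, ← zpow_natCast,
          zpow_comm, zpow_comm w]
    _ = a ^ (m * m.gcdA n + n * m.gcdB n : ℤ) := by
        rw [h, ← zpow_natCast, ← zpow_natCast, ← zpow_mul, ← zpow_mul, zpow_add₀ ha]
    _ = a := by rw [hbezout, zpow_one]

theorem dvd_of_pow_eq_pow_of_isPrimitiveRoot {d : ℕ} {ζ : L}
    (hζ : IsPrimitiveRoot ζ d) (hd : 0 < d) {a v : L} (ha0 : a ≠ 0)
    (ha : ∀ r, r ∣ d → ∀ w : L, w ^ r = a → r = 1) {e : ℕ} (h : v ^ d = a ^ e) :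
    d ∣ e := by
  obtain ⟨g, d', e', hg, hcop, hd', he'⟩ := Nat.exists_coprime' (m := d) (n := e)
    (Nat.gcd_pos_of_pos_left e hd)
  have : NeZero g := ⟨hg.ne'⟩
  have hroot : (a ^ e' / v ^ d') ^ g = 1 := by
    rw [div_pow, ← pow_mul, ← pow_mul, ← hd', ← he', h, div_self (pow_ne_zero e ha0)]
  obtain ⟨j, -, hj⟩ := (hζ.pow hd (by rw [hd', mul_comm])).eq_pow_of_pow_eq_one hroot
  have hv : v ^ d' ≠ 0 := by
    rintro hv
    rw [hd', pow_mul, hv, zero_pow hg.ne'] at h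
    exact pow_ne_zero e ha0 h.symm
  obtain ⟨w, hw⟩ := exists_pow_eq_of_coprime_of_pow_eq_pow (w := ζ ^ j * v) ha0 hcop <| by
    rw [mul_pow, ← pow_mul, mul_comm j, pow_mul, hj, div_mul_cancel₀ _ hv]
  rw [hd', ha d' (hd' ▸ Dvd.intro g rfl) w hw, one_mul, he']
  exact Dvd.intro_left e' rfl

theorem irreducible_X_pow_sub_C_of_isPrimitiveRoot {d : ℕ} {ζ : L}
    (hζ : IsPrimitiveRoot ζ d) (hd : 0 < d) {a : L} (ha0 : a ≠ 0)
    (ha : ∀ r, r ∣ d → ∀ w : L, w ^ r = a → r = 1) :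
    Irreducible (X ^ d - C a : L[X]) := by
  have hne : (X ^ d - C a : L[X]) ≠ 0 := X_pow_sub_C_ne_zero hd a
  have hunit : ¬ IsUnit (X ^ d - C a : L[X]) :=
    not_isUnit_of_natDegree_pos _ (by rwa [natDegree_X_pow_sub_C])
  obtain ⟨g, hg, hgdvd⟩ := WfDvdMonoid.exists_irreducible_factor hunit hne
  have : Fact (Irreducible g) := ⟨hg⟩
  have hroot : AdjoinRoot.root g ^ d = algebraMap L (AdjoinRoot g) a := by
    have haeval : aeval (AdjoinRoot.root g) g = 0 := by rw [AdjoinRoot.aeval_eq, AdjoinRoot.mk_self]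
    have := aeval_eq_zero_of_dvd_aeval_eq_zero hgdvd haeval
    rwa [map_sub, map_pow, aeval_X, aeval_C, sub_eq_zero] at this
  have hnorm : Algebra.norm L (AdjoinRoot.root g) ^ d = a ^ g.natDegree := by
    rw [← map_pow, hroot, Algebra.norm_algebraMap, (AdjoinRoot.powerBasis hg.ne_zero).finrank,
      AdjoinRoot.powerBasis_dim]
  have hle : d ≤ g.natDegree :=
    Nat.le_of_dvd hg.natDegree_pos (dvd_of_pow_eq_pow_of_isPrimitiveRoot hζ hd ha0 ha hnorm)
  exact (associated_of_dvd_of_natDegree_le hgdvd hne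
    (by rwa [natDegree_X_pow_sub_C])).irreducible hg

end Kummer

section Stepanov

open Polynomial

theorem natDegree_resultant_le {R : Type*} [CommRing R] {f g : R[X][X]} {a b : ℕ} (m n : ℕ)
    (hf : ∀ i, (f.coeff i).natDegree ≤ a) (hg : ∀ i, (g.coeff i).natDegree ≤ b) :
    (resultant f g m n).natDegree ≤ n * a + m * b := by
  have hentry (i j : Fin (m + n)) :
      (sylvester f g m n i j).natDegree ≤ Fin.addCases (fun _ => b) (fun _ => a) j := by
    induction j using Fin.addCases <;> simp only [sylvester, Matrix.of_apply, Fin.addCases_left,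
      Fin.addCases_right] <;> split_ifs <;> simp [hf, hg]
  rw [resultant, Matrix.det_apply]
  refine natDegree_sum_le_of_forall_le _ _ fun σ _ => ?_
  calc (σ.sign • ∏ j, sylvester f g m n (σ j) j).natDegree
      ≤ ∑ j, (sylvester f g m n (σ j) j).natDegree :=
        (natDegree_smul_le _ _).trans (natDegree_prod_le _ _)
    _ ≤ ∑ j : Fin (m + n), Fin.addCases (fun _ => b) (fun _ => a) j :=
      sum_le_sum fun j _ => hentry (σ j) j
    _ = n * a + m * b := by simp [Fin.sum_univ_add, add_comm]

theorem resultant_eq_zero_of_eval_eq_zero {R : Type*} [CommRing R] {f g : R[X]} {m n : ℕ} {w : R}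
    (hm : m ≠ 0) (hfm : f.natDegree ≤ m) (hgn : g.natDegree ≤ n) (hf : f.eval w = 0)
    (hg : g.eval w = 0) : resultant f g m n = 0 := by
  obtain ⟨p, q, -, -, hpq⟩ := exists_mul_add_mul_eq_C_resultant f g hfm hgn (.inl hm)
  simpa [hf, hg] using (congrArg (eval w) hpq).symm

/-- The substitution `p(X, Y) ↦ p(X ^ B, X)`, where `Y` is the outer variable of `K[X][Y]`. It
turns the coefficients of `H` into those of `H(U, X ^ B, X)` in Stepanov's method. -/
noncomputable def substExpand (K : Type*) [CommSemiring K] (B : ℕ) : K[X][X] →+* K[X] :=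
  eval₂RingHom (expand K B : K[X] →+* K[X]) X

theorem substExpand_apply {K : Type*} [CommSemiring K] (B : ℕ) (p : K[X][X]) :
    substExpand K B p = p.eval₂ (expand K B : K[X] →+* K[X]) X := rfl

theorem substExpand_C {K : Type*} [CommSemiring K] (B : ℕ) (f : K[X]) :
    substExpand K B (C f) = expand K B f := by
  rw [substExpand_apply, eval₂_C, RingHom.coe_coe]

theorem substExpand_map_C {K : Type*} [CommSemiring K] (B : ℕ) (f : K[X]) :
    substExpand K B (f.map C) = f := by
  rw [substExpand_apply, eval₂_map]
  convert eval₂_C_X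
  ext
  simp

theorem coeff_substExpand {K : Type*} [CommSemiring K] {B : ℕ} {p : K[X][X]}
    (hp : p.natDegree < B) {r : ℕ} (hr : r < B) (t : ℕ) :
    (substExpand K B p).coeff (t * B + r) = (p.coeff r).coeff t := by
  have hB : 0 < B := by omega
  rw [substExpand_apply, eval₂_eq_sum_range' _ hp, finsetSum_coeff,
    Finset.sum_eq_single_of_mem r (mem_range.2 hr), RingHom.coe_coe, coeff_mul_X_pow,
    coeff_expand_mul hB]
  intro j hj hjr
  rw [coeff_mul_X_pow', RingHom.coe_coe, coeff_expand hB]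
  split_ifs with hle hdvd
  · refine absurd (Nat.ModEq.eq_of_lt_of_lt ?_ (mem_range.1 hj) hr) hjr
    simpa [Nat.ModEq] using (Nat.modEq_iff_dvd' hle).2 hdvd
  all_goals rfl

theorem eq_zero_of_substExpand_eq_zero {K : Type*} [CommSemiring K] {B : ℕ} {p : K[X][X]}
    (hp : p.natDegree < B) (h : substExpand K B p = 0) : p = 0 := by
  ext r t
  rcases lt_or_ge r B with hr | hr
  · rw [← coeff_substExpand hp hr, h, coeff_zero, coeff_zero, coeff_zero]
  · simp only [coeff_eq_zero_of_natDegree_lt (hp.trans_le hr), coeff_zero]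

theorem dvd_rootMultiplicity_of_pow_mul_C_eq {K : Type*} [Field K] {f : K[X]} (hf : f ≠ 0)
    {p q : K[X][X]} (hq : q ≠ 0) {r : ℕ} (h : p ^ r * C f = q ^ r * f.map C) (α : K) :
    r ∣ f.rootMultiplicity α := by
  classical
  have hright : q ^ r * f.map C ≠ 0 :=
    mul_ne_zero (pow_ne_zero r hq) ((Polynomial.map_ne_zero_iff C_injective).2 hf)
  have hleft : p ^ r * C f ≠ 0 := by rwa [h]
  have hmult := congrArg (rootMultiplicity (C α)) h
  rw [rootMultiplicity_mul hleft, rootMultiplicity_mul hright, rootMultiplicity_C, add_zero,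
    ← eq_rootMultiplicity_map C_injective, ← count_roots, ← count_roots, roots_pow, roots_pow,
    Multiset.count_nsmul, Multiset.count_nsmul] at hmult
  exact (Nat.dvd_add_right (Dvd.intro _ rfl)).1 (hmult ▸ Dvd.intro _ rfl)

theorem irreducible_X_pow_sub_C_div_map_C {K : Type*} [Field K] {d : ℕ} (hd : 0 < d) {ζ : K}
    (hζ : IsPrimitiveRoot ζ d) {f : K[X]} (hf0 : f ≠ 0)
    (hf : ∀ r, r ∣ d → (∀ α, r ∣ f.rootMultiplicity α) → r = 1) :
    Irreducible (X ^ d - C (algebraMap K[X][X] (FractionRing K[X][X]) (C f) /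
      algebraMap K[X][X] (FractionRing K[X][X]) (f.map C))) := by
  have hinj := IsFractionRing.injective K[X][X] (FractionRing K[X][X])
  have hζ' := ((hζ.map_of_injective C_injective).map_of_injective C_injective).map_of_injective hinj
  have hC : algebraMap K[X][X] (FractionRing K[X][X]) (C f) ≠ 0 := by simpa using hf0
  have hmap : algebraMap K[X][X] (FractionRing K[X][X]) (f.map C) ≠ 0 := by
    simpa [Polynomial.map_eq_zero_iff C_injective] using hf0
  refine irreducible_X_pow_sub_C_of_isPrimitiveRoot hζ' hd (div_ne_zero hC hmap)
    fun r hr w hw => hf r hr ?_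
  obtain ⟨p, q, hq, rfl⟩ := IsFractionRing.div_surjective (A := K[X][X]) w
  have hq0 : q ≠ 0 := nonZeroDivisors.ne_zero hq
  have hp0 : p ≠ 0 := by
    rintro rfl
    rw [map_zero, zero_div, zero_pow (ne_zero_of_dvd_ne_zero hd.ne' hr)] at hw
    exact div_ne_zero hC hmap hw.symm
  refine dvd_rootMultiplicity_of_pow_mul_C_eq hf0 (p := q) hp0 (hinj ?_)
  rw [div_pow, div_eq_div_iff (pow_ne_zero r (by simpa using hq0)) hmap] at hw
  rw [map_mul, map_mul, map_pow, map_pow, hw, mul_comm]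

theorem eq_zero_of_resultant_C_mul_X_pow_sub_C_eq_zero {K : Type*} [Field K] {d : ℕ} {ζ : K}
    (hζ : IsPrimitiveRoot ζ d) {f : K[X]} (hf0 : f ≠ 0)
    (hf : ∀ r, r ∣ d → (∀ α, r ∣ f.rootMultiplicity α) → r = 1) {H : K[X][X][X]}
    (hH : H.natDegree < d) (h : resultant (C (f.map C) * X ^ d - C (C f)) H = 0) :
    H = 0 := by
  set φ := algebraMap K[X][X] (FractionRing K[X][X])
  have hinj : Function.Injective φ := IsFractionRing.injective K[X][X] (FractionRing K[X][X])
  have hmap : φ (f.map C) ≠ 0 := by simpa [φ, Polynomial.map_eq_zero_iff C_injective] using hf0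
  have hirr := irreducible_X_pow_sub_C_div_map_C (by omega) hζ hf0 hf
  have hfactor : (C (f.map C) * X ^ d - C (C f)).map φ =
      C (φ (f.map C)) * (X ^ d - C (φ (C f) / φ (f.map C))) := by
    simp only [Polynomial.map_sub, Polynomial.map_mul, Polynomial.map_pow, map_X, map_C, mul_sub,
      ← C_mul, mul_div_cancel₀ _ hmap]
  have hres : resultant ((C (f.map C) * X ^ d - C (C f)).map φ) (H.map φ) = 0 := by
    rw [natDegree_map_eq_of_injective hinj, natDegree_map_eq_of_injective hinj,
      resultant_map_map, h, map_zero]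
  have hcop := (resultant_eq_zero_iff.1 hres).2
  rw [hfactor, isCoprime_mul_unit_left_left (isUnit_C.2 hmap.isUnit),
    hirr.coprime_iff_not_dvd, not_not] at hcop
  have hdeg : (H.map φ).degree < (X ^ d - C (φ (C f) / φ (f.map C))).degree := by
    rw [degree_X_pow_sub_C (by omega)]
    exact degree_map_le.trans_lt <| (degree_lt_iff_coeff_zero H d).2 fun m hm =>
      coeff_eq_zero_of_natDegree_lt (by omega)
  exact (Polynomial.map_eq_zero_iff hinj).1 (eq_zero_of_dvd_of_degree_lt hcop hdeg)

theorem eq_zero_of_eval₂_substExpand_eq_zero {K : Type*} [Field K] {d B b a : ℕ} {ζ : K}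
    (hζ : IsPrimitiveRoot ζ d) {f : K[X]} (hf0 : f ≠ 0)
    (hf : ∀ r, r ∣ d → (∀ α, r ∣ f.rootMultiplicity α) → r = 1) (hB : B = d * b + 1)
    (hfB : expand K B f = f ^ B) (hab : a + f.natDegree ≤ b) {H : K[X][X][X]}
    (hHd : H.natDegree < d) (hH : ∀ i, (H.coeff i).natDegree ≤ a)
    (h : H.eval₂ (substExpand K B) (f ^ b) = 0) : H = 0 := by
  have hmap0 : f.map (C : K →+* K[X]) ≠ 0 := (Polynomial.map_ne_zero_iff C_injective).2 hf0
  have hdegree : (C (f.map C) * X ^ d - C (C f) : K[X][X][X]).natDegree = d := by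
    rw [natDegree_sub_C, natDegree_C_mul_X_pow _ _ hmap0]
  have hcoeff (i : ℕ) :
      ((C (f.map C) * X ^ d - C (C f) : K[X][X][X]).coeff i).natDegree ≤ f.natDegree := by
    rw [coeff_sub, coeff_C_mul_X_pow, coeff_C]
    refine (natDegree_sub_le _ _).trans (max_le ?_ ?_) <;> split_ifs <;> simp
  refine eq_zero_of_resultant_C_mul_X_pow_sub_C_eq_zero hζ hf0 hf hHd
    (eq_zero_of_substExpand_eq_zero (B := B) ?_ ?_)
  · calc (resultant (C (f.map C) * X ^ d - C (C f)) H).natDegree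
        ≤ H.natDegree * f.natDegree + d * a := by
          simpa only [hdegree] using natDegree_resultant_le _ _ hcoeff hH
      _ ≤ d * f.natDegree + d * a := by gcongr
      _ = d * (a + f.natDegree) := by ring
      _ ≤ d * b := by gcongr
      _ < B := by omega
  · rw [← resultant_map_map]
    refine resultant_eq_zero_of_eval_eq_zero (w := f ^ b) (by omega) natDegree_map_le
      natDegree_map_le ?_ (by rwa [eval_map])
    simp only [Polynomial.map_sub, Polynomial.map_mul, Polynomial.map_pow, map_X, map_C,
      eval_sub, eval_mul, eval_C, eval_pow, eval_X, substExpand_C, substExpand_map_C, hfB]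
    rw [← pow_mul, ← pow_succ', mul_comm b, ← hB, sub_self]

end Stepanov

section Count

open Polynomial

theorem exists_ne_zero_of_degree_lt {K V : Type*} [Field K] [AddCommGroup V] [Module K V]
    [FiniteDimensional K V] (T : V →ₗ[K] K[X]) {N : ℕ} (hT : ∀ x, (T x).degree < N)
    (hN : N < Module.finrank K V) : ∃ x ≠ 0, T x = 0 := by
  have : FiniteDimensional K (degreeLT K N) := .equiv (degreeLTEquiv K N).symm
  have hker := LinearMap.ker_ne_bot_of_finrank_lt
    (f := T.codRestrict (degreeLT K N) fun x => mem_degreeLT.2 (hT x))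
    (by rwa [(degreeLTEquiv K N).finrank_eq, Module.finrank_fin_fun])
  obtain ⟨x, hx, hx0⟩ := Submodule.exists_mem_ne_zero_of_ne_bot hker
  exact ⟨x, hx0, congrArg Subtype.val (LinearMap.mem_ker.1 hx)⟩

open scoped Classical in
/-- The polynomial `∑ x i r t • U ^ i Y ^ r X ^ t` in three variables with the given finite array of
coefficients, where `U` is the outermost and `X` the innermost variable of `K[X][Y][U]`. It
parametrises the candidates for the auxiliary polynomial in Stepanov's method. -/
noncomputable def ofFn₃ (K : Type*) [Field K] (d a l : ℕ) :
    (Fin d → Fin a → Fin l → K) →ₗ[K] K[X][X][X] :=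
  (ofFn d).restrictScalars K ∘ₗ
    (((ofFn a).restrictScalars K ∘ₗ (ofFn l).compLeft (Fin a)).compLeft (Fin d))

theorem injective_ofFn₃ (K : Type*) [Field K] (d a l : ℕ) : Function.Injective (ofFn₃ K d a l) := by
  classical
  exact (injective_ofFn d).comp <| Function.Injective.comp_left <|
    (injective_ofFn a).comp <| Function.Injective.comp_left <| injective_ofFn l

theorem coeff_ofFn_of_forall {R : Type*} [Semiring R] [DecidableEq R] {P : R → Prop} (h0 : P 0)
    {n : ℕ} {v : Fin n → R} (hv : ∀ i, P (v i)) (i : ℕ) : P ((ofFn n v).coeff i) := by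
  rcases lt_or_ge i n with hi | hi
  · exact (ofFn_coeff_eq_val_of_lt v hi).symm ▸ hv ⟨i, hi⟩
  · exact (ofFn_coeff_eq_zero_of_ge v hi).symm ▸ h0

theorem natDegree_coeff_ofFn₃_lt {K : Type*} [Field K] {d a l : ℕ} (ha : 1 ≤ a)
    (x : Fin d → Fin a → Fin l → K) (i : ℕ) : ((ofFn₃ K d a l x).coeff i).natDegree < a := by
  classical
  exact coeff_ofFn_of_forall (P := fun p : K[X][X] => p.natDegree < a)
    (by simpa using Nat.lt_of_succ_le ha) (fun _ => ofFn_natDegree_lt ha _) i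

theorem natDegree_coeff_coeff_ofFn₃_lt {K : Type*} [Field K] {d a l : ℕ} (hl : 1 ≤ l)
    (x : Fin d → Fin a → Fin l → K) (i r : ℕ) :
    (((ofFn₃ K d a l x).coeff i).coeff r).natDegree < l := by
  classical
  exact coeff_ofFn_of_forall (P := fun p : K[X][X] => (p.coeff r).natDegree < l)
    (by simpa using Nat.lt_of_succ_le hl)
    (fun _ => coeff_ofFn_of_forall (P := fun p : K[X] => p.natDegree < l)
      (by simpa using Nat.lt_of_succ_le hl) (fun _ => ofFn_natDegree_lt hl _) r) i

theorem natDegree_ofFn₃_lt {K : Type*} [Field K] {d a l : ℕ} (hd : 1 ≤ d)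
    (x : Fin d → Fin a → Fin l → K) : (ofFn₃ K d a l x).natDegree < d := by
  classical
  exact ofFn_natDegree_lt hd _

theorem natDegree_eval_X_pow_mul_le {R : Type*} [CommSemiring R] {p : R[X][X]} {q : R[X]}
    {B a l m : ℕ} (hp : p.natDegree ≤ a) (hpl : ∀ r, (p.coeff r).natDegree ≤ l)
    (hq : q.natDegree ≤ m) :
    (p.eval (X ^ B) * q).natDegree ≤ l + a * B + m := by
  refine natDegree_mul_le.trans (add_le_add ?_ hq)
  rw [eval_eq_sum_range]
  refine natDegree_sum_le_of_forall_le _ _ fun r hr =>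
    natDegree_mul_le.trans (add_le_add (hpl r) ?_)
  rw [← pow_mul, mul_comm]
  exact (natDegree_X_pow_le _).trans (Nat.mul_le_mul_right B ((mem_range_succ_iff.1 hr).trans hp))

theorem exists_sum_eval_X_pow_mul_eq_zero {K : Type*} [Field K] {d a l m B : ℕ} {P : ℕ → K[X]}
    (hd : 1 ≤ d) (hP : ∀ i ∈ range d, (P i).natDegree ≤ m)
    (h : l + a * B + m + 1 < d * ((a + 1) * (l + 1))) :
    ∃ H : K[X][X][X], H ≠ 0 ∧ H.natDegree < d ∧ (∀ i, (H.coeff i).natDegree ≤ a) ∧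
      (∀ i r, ((H.coeff i).coeff r).natDegree ≤ l) ∧
      ∑ i ∈ range d, (H.coeff i).eval (X ^ B) * P i = 0 := by
  let Φ : K[X][X][X] →ₗ[K] K[X] :=
    { toFun := fun H => ∑ i ∈ range d, (H.coeff i).eval (X ^ B) * P i
      map_add' := fun H₁ H₂ => by simp only [coeff_add, eval_add, add_mul, sum_add_distrib]
      map_smul' := fun c H => by
        simp only [coeff_smul, eval_smul, smul_mul_assoc, smul_sum, RingHom.id_apply] }
  have ha x i : ((ofFn₃ K d (a + 1) (l + 1) x).coeff i).natDegree ≤ a :=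
    Nat.le_of_lt_succ (natDegree_coeff_ofFn₃_lt a.succ_pos x i)
  have hl x i r : (((ofFn₃ K d (a + 1) (l + 1) x).coeff i).coeff r).natDegree ≤ l :=
    Nat.le_of_lt_succ (natDegree_coeff_coeff_ofFn₃_lt l.succ_pos x i r)
  have hdeg (x) : (Φ (ofFn₃ K d (a + 1) (l + 1) x)).degree < (l + a * B + m + 1 : ℕ) :=
    degree_le_natDegree.trans_lt <| WithBot.coe_lt_coe.2 <| Nat.lt_succ_of_le <|
      natDegree_sum_le_of_forall_le _ _ fun i hi =>
        natDegree_eval_X_pow_mul_le (ha x i) (hl x i) (hP i hi)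
  obtain ⟨x, hx0, hx⟩ := exists_ne_zero_of_degree_lt (Φ ∘ₗ ofFn₃ K d (a + 1) (l + 1)) hdeg
    (by simpa [Module.finrank_pi_fintype] using h)
  exact ⟨ofFn₃ K d (a + 1) (l + 1) x,
    (map_ne_zero_iff _ (injective_ofFn₃ K d (a + 1) (l + 1))).2 hx0, natDegree_ofFn₃_lt hd x,
    ha x, hl x, hx⟩

theorem natDegree_eval₂_substExpand_le {K : Type*} [CommSemiring K] {H : K[X][X][X]}
    {d a l m B : ℕ} {w : K[X]} (hd : H.natDegree ≤ d) (ha : ∀ i, (H.coeff i).natDegree ≤ a)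
    (hl : ∀ i r, ((H.coeff i).coeff r).natDegree ≤ l) (hw : w.natDegree ≤ m) :
    (H.eval₂ (substExpand K B) w).natDegree ≤ l * B + a + d * m := by
  rw [eval₂_eq_sum_range]
  refine natDegree_sum_le_of_forall_le _ _ fun i hi =>
    natDegree_mul_le.trans (add_le_add ?_ (natDegree_pow_le.trans ?_))
  · rw [substExpand_apply, eval₂_eq_sum_range]
    refine natDegree_sum_le_of_forall_le _ _ fun r hr =>
      natDegree_mul_le.trans (add_le_add ?_ ?_)
    · rw [RingHom.coe_coe, natDegree_expand]
      exact Nat.mul_le_mul_right B (hl i r)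
    · exact (natDegree_X_pow_le r).trans ((mem_range_succ_iff.1 hr).trans (ha i))
  · exact Nat.mul_le_mul ((mem_range_succ_iff.1 hi).trans hd) hw

theorem algHom_aeval_substExpand {K E : Type*} [CommSemiring K] [CommSemiring E] [Algebra K E]
    {φ : E →ₐ[K] E} {B : ℕ} {γ : E} (hγ : φ γ = γ ^ B) (hγ' : φ (γ ^ B) = γ) (p : K[X][X]) :
    φ (aeval γ (substExpand K B p)) = aeval γ (p.eval (X ^ B)) := by
  suffices h : ((φ.comp (aeval γ) : K[X] →ₐ[K] E) : K[X] →+* E).comp (substExpand K B) =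
      ((aeval γ : K[X] →ₐ[K] E) : K[X] →+* E).comp (evalRingHom (X ^ B)) from
    RingHom.congr_fun h p
  refine Polynomial.ringHom_ext (fun f => ?_) ?_
  · simp [substExpand_C, expand_aeval, ← aeval_algHom_apply, hγ']
  · simp [substExpand_apply, hγ]

theorem algHom_aeval_eval₂_substExpand_mul {K E : Type*} [CommSemiring K] [CommSemiring E]
    [Algebra K E] {φ : E →ₐ[K] E} {B d : ℕ} {γ : E} (hγ : φ γ = γ ^ B) (hγ' : φ (γ ^ B) = γ)
    {w : K[X]} {c : K} (hw : φ (aeval γ w) * aeval γ w = algebraMap K E c)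
    {H : K[X][X][X]} (hH : H.natDegree < d) :
    φ (aeval γ (H.eval₂ (substExpand K B) w)) * aeval γ w ^ (d - 1) =
      aeval γ (∑ i ∈ range d, (H.coeff i).eval (X ^ B) * (C (c ^ i) * w ^ (d - 1 - i))) := by
  rw [eval₂_eq_sum_range' _ hH]
  simp only [map_sum, map_mul, sum_mul]
  refine sum_congr rfl fun i hi => ?_
  have hsplit : aeval γ w ^ (d - 1) = aeval γ w ^ i * aeval γ w ^ (d - 1 - i) := by
    rw [← pow_add, Nat.add_sub_cancel' (Nat.le_sub_one_of_lt (mem_range.1 hi))]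
  simp only [algHom_aeval_substExpand hγ hγ', map_pow, aeval_C, hsplit, ← hw, mul_pow]
  ring

theorem expand_card_pow {K : Type*} [Field K] [Fintype K] (f : K[X]) (m : ℕ) :
    expand K (Fintype.card K ^ m) f = f ^ Fintype.card K ^ m := by
  induction m with
  | zero => simp
  | succ m ih => rw [pow_succ, expand_mul, FiniteField.expand_card, map_pow, ih, ← pow_mul]

theorem card_filter_aeval_eq_zero_le {K E : Type*} [Field K] [Field E] [Fintype E] [DecidableEq E]
    [Algebra K E] {g : K[X]} (hg : g ≠ 0) : #{γ : E | aeval γ g = 0} ≤ g.natDegree :=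
  calc #{γ : E | aeval γ g = 0} ≤ #(g.aroots E).toFinset :=
        card_le_card fun γ hγ => by simpa [hg] using hγ
    _ ≤ (g.map (algebraMap K E)).natDegree := (Multiset.toFinset_card_le _).trans (card_roots' _)
    _ ≤ g.natDegree := natDegree_map_le

theorem stepanov_unknowns_lt {D b d B : ℕ} (hd : 2 ≤ d) (hb : 2 * D < b) (hB : B = d * b + 1) :
    b + 2 * D + (b - D) * B + d * (b * D) + 1 < d * ((b - D + 1) * (b + 2 * D + 1)) := by
  obtain ⟨a, rfl⟩ := Nat.exists_eq_add_of_le' (show D ≤ b by lia)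
  have hquad : d * (D * (D + 1)) ≤ d * (D * a) :=
    Nat.mul_le_mul_left _ (Nat.mul_le_mul_left _ (by lia))
  rw [hB, Nat.add_sub_cancel]
  nlinarith [Nat.mul_le_mul_right a hd, Nat.mul_le_mul_right D hd]

theorem card_filter_aeval_pow_eq_le {K E : Type*} [Field K] [Fintype K] [Field E] [Fintype E]
    [DecidableEq E] [Algebra K E] {d B b m : ℕ} {ζ : K} {f : K[X]} (hd : 2 ≤ d)
    (hζ : IsPrimitiveRoot ζ d) (hf0 : f ≠ 0)
    (hf : ∀ r, r ∣ d → (∀ α, r ∣ f.rootMultiplicity α) → r = 1) (hB : B = d * b + 1)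
    (hBm : B = Fintype.card K ^ m) (hE : Fintype.card E = B ^ 2) (hb : 2 * f.natDegree < b)
    {c : K} (hc : c ≠ 0) :
    #{γ : E | aeval γ f ^ (b * (B + 1)) = algebraMap K E c} ≤
      b * B + (3 * f.natDegree + 1) * B := by
  set D := f.natDegree
  have hwdeg : (f ^ b).natDegree ≤ b * D := natDegree_pow_le
  obtain ⟨H, hH0, hHd, hHa, hHl, hsum⟩ := exists_sum_eval_X_pow_mul_eq_zero (K := K) (d := d)
    (a := b - D) (l := b + 2 * D) (m := d * (b * D)) (B := B)
    (P := fun i => C (c ^ i) * (f ^ b) ^ (d - 1 - i)) (by lia)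
    (fun i _ => (natDegree_C_mul_le _ _).trans <| natDegree_pow_le.trans <|
      Nat.mul_le_mul (by lia) hwdeg)
    (stepanov_unknowns_lt hd hb hB)
  set G := H.eval₂ (substExpand K B) (f ^ b)
  have hG0 : G ≠ 0 := fun h => hH0 <| eq_zero_of_eval₂_substExpand_eq_zero hζ hf0 hf hB
    (by rw [hBm, expand_card_pow]) (by lia) hHd hHa h
  have hGdeg : G.natDegree ≤ b * B + (3 * D + 1) * B := by
    refine (natDegree_eval₂_substExpand_le hHd.le hHa hHl hwdeg).trans ?_
    have hDB : d * (b * D) ≤ D * B := by rw [hB]; nlinarith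
    have hbB : b - D ≤ B := by
      rw [hB]
      exact (Nat.sub_le _ _).trans ((Nat.le_mul_of_pos_left b (by lia)).trans (Nat.le_succ _))
    linarith
  have hroot (γ : E) (hγ : aeval γ f ^ (b * (B + 1)) = algebraMap K E c) : aeval γ G = 0 := by
    let φ : E →ₐ[K] E := FiniteField.frobeniusAlgHom K E ^ m
    have hφ y : φ y = y ^ B := by
      simp only [φ, AlgHom.coe_pow, FiniteField.coe_frobeniusAlgHom, pow_iterate, hBm]
    have hφφ : φ (γ ^ B) = γ := by rw [hφ, ← pow_mul, ← sq, ← hE, FiniteField.pow_card]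
    have hw : φ (aeval γ (f ^ b)) * aeval γ (f ^ b) = algebraMap K E c := by
      rw [hφ, ← pow_succ, map_pow, ← pow_mul, hγ]
    have hw0 : aeval γ (f ^ b) ≠ 0 := fun h =>
      hc ((map_eq_zero (algebraMap K E)).1 (by rw [← hw, h, mul_zero]))
    have hker := algHom_aeval_eval₂_substExpand_mul (hφ γ) hφφ hw hHd
    rw [hsum, map_zero] at hker
    exact (map_eq_zero φ).1 ((mul_eq_zero.1 hker).resolve_right (pow_ne_zero _ hw0))
  calc #{γ : E | aeval γ f ^ (b * (B + 1)) = algebraMap K E c} ≤ #{γ : E | aeval γ G = 0} :=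
        card_le_card (monotone_filter_right _ fun γ _ => hroot γ)
    _ ≤ G.natDegree := card_filter_aeval_eq_zero_le hG0
    _ ≤ b * B + (3 * D + 1) * B := hGdeg

end Count

section CharSumCount

open Polynomial

theorem norm_sum_le_of_card_fiber_le {ι V : Type*} [Fintype ι] [NormedAddCommGroup V]
    [NormedSpace ℝ V] [DecidableEq V] {v : ι → V} {Ω : Finset V} (hΩ : ∀ ω ∈ Ω, ‖ω‖ = 1)
    (hsum : ∑ ω ∈ Ω, ω = 0) (hv : ∀ i, v i ≠ 0 → v i ∈ Ω) {T : ℝ}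
    (hT : ∀ ω ∈ Ω, (#{i | v i = ω} : ℝ) ≤ T) :
    ‖∑ i, v i‖ ≤ #Ω * T - #{i | v i ≠ 0} := by
  have hmaps : (({i | v i ≠ 0} : Finset ι) : Set ι).MapsTo v Ω := fun i hi =>
    hv i (by simpa using hi)
  have hfiber (ω) (hω : ω ∈ Ω) :
      ({i ∈ ({i | v i ≠ 0} : Finset ι) | v i = ω} : Finset ι) = ({i | v i = ω} : Finset ι) := by
    have hω0 : ω ≠ 0 := norm_ne_zero_iff.1 (by simp [hΩ ω hω])
    rw [filter_filter]
    exact filter_congr fun i _ => and_iff_right_of_imp fun h => by rwa [h]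
  have hcard : (#{i | v i ≠ 0} : ℝ) = ∑ ω ∈ Ω, (#{i | v i = ω} : ℝ) := by
    rw [card_eq_sum_card_fiberwise hmaps, Nat.cast_sum]
    exact sum_congr rfl fun ω hω => by rw [hfiber ω hω]
  have hexpand : ∑ i, v i = ∑ ω ∈ Ω, ((#{i | v i = ω} : ℝ) - T) • ω := by
    simp only [sub_smul, sum_sub_distrib]
    rw [← smul_sum, hsum, smul_zero, sub_zero, ← sum_filter_ne_zero,
      ← sum_fiberwise_of_maps_to hmaps]
    refine sum_congr rfl fun ω hω => ?_
    rw [hfiber ω hω, sum_congr rfl fun i hi => (mem_filter.1 hi).2, sum_const,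
      Nat.cast_smul_eq_nsmul]
  calc ‖∑ i, v i‖ ≤ ∑ ω ∈ Ω, ‖((#{i | v i = ω} : ℝ) - T) • ω‖ := hexpand ▸ norm_sum_le _ _
    _ = ∑ ω ∈ Ω, (T - #{i | v i = ω}) := sum_congr rfl fun ω hω => by
        rw [norm_smul, hΩ ω hω, mul_one, Real.norm_eq_abs, abs_sub_comm,
          abs_of_nonneg (sub_nonneg.2 (hT ω hω))]
    _ = #Ω * T - #{i | v i ≠ 0} := by rw [sum_sub_distrib, sum_const, nsmul_eq_mul, hcard]

theorem sum_nthRootsFinset_one_eq_zero {R : Type*} [CommRing R] [IsDomain R] {d : ℕ} {ζ : R}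
    (hζ : IsPrimitiveRoot ζ d) (hd : 1 < d) : ∑ ω ∈ nthRootsFinset d (1 : R), ω = 0 := by
  classical
  have himage : nthRootsFinset d (1 : R) = (range d).image (ζ ^ ·) := by
    have : NeZero d := ⟨by lia⟩
    ext ω
    rw [mem_nthRootsFinset (by lia), mem_image]
    refine ⟨fun h => ?_, ?_⟩
    · obtain ⟨i, hi, rfl⟩ := hζ.eq_pow_of_pow_eq_one h
      exact ⟨i, mem_range.2 hi, rfl⟩
    · rintro ⟨i, -, rfl⟩
      rw [← pow_mul, mul_comm, pow_mul, hζ.pow_eq_one, one_pow]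
  rw [himage, sum_image fun i hi j hj h => hζ.pow_inj (mem_range.1 hi) (mem_range.1 hj) h]
  exact hζ.geom_sum_eq_zero hd

theorem one_lt_orderOf_mulChar {M R : Type*} [CommMonoid M] [Finite Mˣ] [CommMonoidWithZero R]
    {χ : MulChar M R} (hχ : χ ≠ 1) : 1 < orderOf χ :=
  lt_of_le_of_ne χ.orderOf_pos fun h => hχ (orderOf_eq_one_iff.1 h.symm)

theorem mulChar_pow_orderOf_eq_one {M R : Type*} [CommMonoid M] [Finite Mˣ] [CommMonoidWithZero R]
    (χ : MulChar M R) {x : M} (hx : IsUnit x) : χ x ^ orderOf χ = 1 := by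
  rw [← MulChar.pow_apply' χ χ.orderOf_pos.ne', pow_orderOf_eq_one, MulChar.one_apply hx]

theorem mulChar_ne_zero {K R : Type*} [Field K] [CommMonoidWithZero R] [Nontrivial R]
    (χ : MulChar K R) {z : K} (hz : z ≠ 0) : χ z ≠ 0 :=
  ((IsUnit.mk0 z hz).map χ).ne_zero

open scoped Classical in
theorem norm_sum_mulChar_le_of_card_fiber_le {K : Type*} [Field K] [Finite K] {χ : MulChar K ℂ}
    (hχ : χ ≠ 1) {ι : Type*} [Fintype ι] (v : ι → K) {T : ℝ}
    (hT : ∀ ω ≠ 0, (#{i | χ (v i) = ω} : ℝ) ≤ T) :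
    ‖∑ i, χ (v i)‖ ≤ orderOf χ * T - #{i | χ (v i) ≠ 0} := by
  have hd : 1 < orderOf χ := one_lt_orderOf_mulChar hχ
  have hd0 : orderOf χ ≠ 0 := by lia
  have hprim := Complex.isPrimitiveRoot_exp (orderOf χ) hd0
  have hmem (ω : ℂ) : ω ∈ nthRootsFinset (orderOf χ) (1 : ℂ) ↔ ω ^ orderOf χ = 1 :=
    mem_nthRootsFinset χ.orderOf_pos 1
  rw [← hprim.card_nthRootsFinset]
  refine norm_sum_le_of_card_fiber_le
    (fun ω hω => Complex.norm_eq_one_of_pow_eq_one ((hmem ω).1 hω) hd0)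
    (sum_nthRootsFinset_one_eq_zero hprim hd) (fun i hi => (hmem _).2 ?_)
    fun ω hω => hT ω ?_
  · exact mulChar_pow_orderOf_eq_one χ
      (isUnit_iff_ne_zero.2 fun h => hi (by rw [h, MulChar.map_zero]))
  · rintro rfl
    simpa [hd0] using (hmem 0).1 hω

open scoped Classical in
theorem card_le_card_filter_mulChar_norm_aeval_ne_zero_add
    {K E : Type*} [Field K] [Field E] [Fintype E] [Algebra K E]
    (χ : MulChar K ℂ) {f : K[X]} (hf : f ≠ 0) :
    Fintype.card E ≤ #{γ : E | χ (Algebra.norm K (aeval γ f)) ≠ 0} + f.natDegree :=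
  calc Fintype.card E = #(univ : Finset E) := card_univ.symm
    _ ≤ #{γ : E | χ (Algebra.norm K (aeval γ f)) ≠ 0} + #{γ : E | aeval γ f = 0} := by
      refine (card_le_card fun γ _ => ?_).trans (card_union_le _ _)
      rcases eq_or_ne (aeval γ f) 0 with h | h
      · simp [h]
      · simp [mulChar_ne_zero χ (Algebra.norm_ne_zero_iff.2 h)]
    _ ≤ #{γ : E | χ (Algebra.norm K (aeval γ f)) ≠ 0} + f.natDegree :=
      Nat.add_le_add_left (card_filter_aeval_eq_zero_le hf) _

variable {K : Type*} [Field K] [Fintype K]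

theorem pow_eq_one_of_mulChar_eq_one {R : Type*} [CommRing R] {χ : MulChar K R} {u : Kˣ}
    (hu : χ u = 1) : u ^ ((Fintype.card K - 1) / orderOf χ) = 1 := by
  classical
  obtain ⟨g, hg⟩ := IsCyclic.exists_generator (α := Kˣ)
  obtain ⟨k, rfl⟩ := mem_powers_iff_mem_zpowers.2 (hg u)
  have hdvd : orderOf χ ∣ k := by
    rw [orderOf_dvd_iff_pow_eq_one, MulChar.eq_iff hg, MulChar.pow_apply_coe, ← map_pow,
      ← Units.val_pow_eq_pow_val, MulChar.one_apply_coe]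
    exact hu
  rw [← pow_mul, ← orderOf_dvd_iff_pow_eq_one, orderOf_eq_card_of_forall_mem_zpowers hg,
    Nat.card_eq_fintype_card, Fintype.card_units]
  calc Fintype.card K - 1 = orderOf χ * ((Fintype.card K - 1) / orderOf χ) :=
        (Nat.mul_div_cancel' χ.orderOf_dvd_card_sub_one).symm
    _ ∣ k * ((Fintype.card K - 1) / orderOf χ) := mul_dvd_mul_right hdvd _

theorem pow_eq_pow_of_mulChar_eq {R : Type*} [CommRing R] [Nontrivial R] {χ : MulChar K R} {y z : K}
    (hz : z ≠ 0) (h : χ y = χ z) :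
    y ^ ((Fintype.card K - 1) / orderOf χ) = z ^ ((Fintype.card K - 1) / orderOf χ) := by
  have hz' : IsUnit (χ z) := (IsUnit.mk0 z hz).map χ
  have hy : y ≠ 0 := by
    rintro rfl
    exact hz'.ne_zero (by rw [← h, MulChar.map_zero])
  have hu : χ (Units.mk0 y hy / Units.mk0 z hz : Kˣ) = 1 := by
    refine hz'.mul_right_cancel ?_
    rw [← map_mul, Units.val_div_eq_div_val, Units.val_mk0, Units.val_mk0, div_mul_cancel₀ y hz, h,
      one_mul]
  have := pow_eq_one_of_mulChar_eq_one hu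
  rw [div_pow, div_eq_one] at this
  simpa using congrArg Units.val this

theorem exists_isPrimitiveRoot_of_dvd_card_sub_one {d : ℕ} (hd : d ∣ Fintype.card K - 1) :
    ∃ ζ : K, IsPrimitiveRoot ζ d := by
  classical
  obtain ⟨t, ht⟩ := hd
  obtain ⟨g, hg⟩ := IsCyclic.exists_ofOrder_eq_natCard (α := Kˣ)
  rw [Nat.card_eq_fintype_card, Fintype.card_units] at hg
  have hprim : IsPrimitiveRoot g (Fintype.card K - 1) := hg ▸ IsPrimitiveRoot.orderOf g
  exact ⟨_, IsPrimitiveRoot.coe_units_iff.2 <|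
    hprim.pow (Nat.sub_pos_of_lt Fintype.one_lt_card) (ht.trans (mul_comm d t))⟩

variable {E : Type*} [Field E] [Fintype E] [Algebra K E]

theorem algebraMap_norm_pow_eq {d t b B m : ℕ} (hd : 0 < d) (hdt : Fintype.card K - 1 = d * t)
    (hB : B = d * b + 1) (hBm : B = Fintype.card K ^ m) (hE : Fintype.card E = B ^ 2) (y : E) :
    algebraMap K E (Algebra.norm K y ^ t) = y ^ (b * (B + 1)) := by
  obtain ⟨c, hc⟩ : Fintype.card K - 1 ∣ B ^ 2 - 1 := by
    rw [hBm, ← pow_mul]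
    exact Nat.sub_one_dvd_pow_sub_one _ _
  have hsq : B ^ 2 - 1 = d * (b * (B + 1)) := by
    have : B ^ 2 = d * (b * (B + 1)) + 1 := by rw [hB]; ring
    lia
  have hexp : c * t = b * (B + 1) :=
    Nat.eq_of_mul_eq_mul_left hd (by rw [← hsq, hc, hdt]; ring)
  rw [map_pow, FiniteField.algebraMap_norm_eq_pow, ← pow_mul, Nat.card_eq_fintype_card,
    Nat.card_eq_fintype_card, hE, hc,
    Nat.mul_div_cancel_left _ (Nat.sub_pos_of_lt Fintype.one_lt_card), hexp]

open scoped Classical in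
theorem card_filter_mulChar_norm_aeval_eq_le {χ : MulChar K ℂ} (hχ : χ ≠ 1) {f : K[X]}
    (hf0 : f ≠ 0) (hf : ∀ r, r ∣ orderOf χ → (∀ α, r ∣ f.rootMultiplicity α) → r = 1)
    {b B m : ℕ} (hB : B = orderOf χ * b + 1) (hBm : B = Fintype.card K ^ m)
    (hE : Fintype.card E = B ^ 2) (hb : 2 * f.natDegree < b) {ω : ℂ} (hω : ω ≠ 0) :
    #{γ : E | χ (Algebra.norm K (aeval γ f)) = ω} ≤ b * B + (3 * f.natDegree + 1) * B := by
  by_cases h : ∃ γ₀ : E, χ (Algebra.norm K (aeval γ₀ f)) = ω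
  · obtain ⟨γ₀, rfl⟩ := h
    set z := Algebra.norm K (aeval γ₀ f)
    have hz : z ≠ 0 := fun h => hω (by rw [h, MulChar.map_zero])
    obtain ⟨ζ, hζ⟩ := exists_isPrimitiveRoot_of_dvd_card_sub_one χ.orderOf_dvd_card_sub_one
    refine (card_le_card (monotone_filter_right _ fun γ _ hγ => ?_)).trans
      (card_filter_aeval_pow_eq_le (one_lt_orderOf_mulChar hχ) hζ hf0 hf hB hBm hE hb
        (pow_ne_zero ((Fintype.card K - 1) / orderOf χ) hz))
    rw [← algebraMap_norm_pow_eq χ.orderOf_pos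
      (Nat.mul_div_cancel' χ.orderOf_dvd_card_sub_one).symm hB hBm hE,
      pow_eq_pow_of_mulChar_eq hz hγ]
  · rw [filter_false_of_mem fun γ _ => not_exists.1 h γ, card_empty]
    exact Nat.zero_le _

theorem norm_sum_mulChar_norm_aeval_le {χ : MulChar K ℂ} (hχ : χ ≠ 1) {f : K[X]} (hf0 : f ≠ 0)
    (hf : ∀ r, r ∣ orderOf χ → (∀ α, r ∣ f.rootMultiplicity α) → r = 1) {B m : ℕ}
    (hBm : B = Fintype.card K ^ m) (hE : Fintype.card E = B ^ 2)
    (hB : 2 * f.natDegree * orderOf χ + 1 < B) :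
    ‖∑ γ : E, χ (Algebra.norm K (aeval γ f))‖ ≤
      (orderOf χ * (3 * f.natDegree + 1) + f.natDegree) * B := by
  classical
  set D := f.natDegree
  set d := orderOf χ
  obtain ⟨b, hb⟩ : d ∣ B - 1 := hBm ▸
    χ.orderOf_dvd_card_sub_one.trans (Nat.sub_one_dvd_pow_sub_one _ _)
  have hBb : B = d * b + 1 := by lia
  have hbD : 2 * D < b := lt_of_mul_lt_mul_left (by lia : d * (2 * D) < d * b) (Nat.zero_le d)
  have hbound := norm_sum_mulChar_le_of_card_fiber_le hχ
    (fun γ : E => Algebra.norm K (aeval γ f)) (T := (b * B + (3 * D + 1) * B : ℕ)) fun ω hω => by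
      exact_mod_cast card_filter_mulChar_norm_aeval_eq_le hχ hf0 hf hBb hBm hE hbD hω
  have hcard : (B : ℝ) ^ 2 ≤ #{γ : E | χ (Algebra.norm K (aeval γ f)) ≠ 0} + D := by
    exact_mod_cast hE ▸ card_le_card_filter_mulChar_norm_aeval_ne_zero_add χ hf0
  have hB' : (B : ℝ) = d * b + 1 := by exact_mod_cast hBb
  have hDB : (D : ℝ) ≤ D * B :=
    le_mul_of_one_le_right D.cast_nonneg (by exact_mod_cast (by lia : 1 ≤ B))
  push_cast at hbound
  calc ‖∑ γ : E, χ (Algebra.norm K (aeval γ f))‖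
      ≤ d * (b * B + (3 * D + 1) * B) - #{γ : E | χ (Algebra.norm K (aeval γ f)) ≠ 0} := hbound
    _ ≤ d * (b * B + (3 * D + 1) * B) - (B ^ 2 - D) := by linarith
    _ = d * (3 * D + 1) * B + D - B := by rw [hB']; ring
    _ ≤ (d * (3 * D + 1) + D) * B := by linarith

end CharSumCount

section PowerSums

open Filter Polynomial

theorem le_of_eventually_pow_le_mul_pow {x R D : ℝ} (hR : 0 < R)
    (h : ∀ᶠ m in atTop, x ^ m ≤ D * R ^ m) : x ≤ R := by
  by_contra! hlt
  have hgrow := tendsto_pow_atTop_atTop_of_one_lt ((one_lt_div hR).2 hlt)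
  obtain ⟨m, hm, hDm⟩ := (h.and (hgrow.eventually_gt_atTop D)).exists
  rw [div_pow, lt_div_iff₀ (pow_pos hR m)] at hDm
  exact hDm.not_ge hm

theorem sum_coeff_mul_sum_map_pow {R : Type*} [CommSemiring R] (s : Multiset R) (p : R[X]) (m : ℕ) :
    ∑ k ∈ range (p.natDegree + 1), p.coeff k * (s.map (· ^ (m + k))).sum =
      (s.map fun w => w ^ m * p.eval w).sum := by
  induction s using Multiset.induction_on with
  | empty => simp
  | cons w s ih =>
    simp only [Multiset.map_cons, Multiset.sum_cons, mul_add, sum_add_distrib, ih]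
    simp only [eval_eq_sum_range, mul_sum, pow_add, mul_left_comm]

theorem norm_le_of_norm_sum_map_pow_le {𝕜 : Type*} [RCLike 𝕜] {s : Multiset 𝕜} {R C : ℝ}
    (hR : 0 < R) (h : ∀ᶠ m in atTop, ‖(s.map (· ^ m)).sum‖ ≤ C * R ^ m) {z : 𝕜} (hz : z ∈ s) :
    ‖z‖ ≤ R := by
  classical
  set p := Lagrange.basis s.toFinset id z
  have hp (m : ℕ) : (s.map fun w => w ^ m * p.eval w).sum = s.count z * z ^ m := by
    rw [sum_multiset_map_count, sum_eq_single_of_mem z (Multiset.mem_toFinset.2 hz)]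
    · rw [← id_eq z, Lagrange.eval_basis_self Function.injective_id.injOn
        (Multiset.mem_toFinset.2 hz)]
      simp
    · intro w hw hwz
      rw [← id_eq w, Lagrange.eval_basis_of_ne hwz.symm hw, mul_zero, smul_zero]
  obtain ⟨N, hN⟩ := eventually_atTop.1 h
  refine le_of_eventually_pow_le_mul_pow hR
    (D := ∑ k ∈ range (p.natDegree + 1), ‖p.coeff k‖ * (C * R ^ k))
    ((eventually_ge_atTop N).mono fun m hm => ?_)
  calc ‖z‖ ^ m ≤ s.count z * ‖z‖ ^ m :=
        le_mul_of_one_le_left (by positivity)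
          (by exact_mod_cast Multiset.one_le_count_iff_mem.2 hz)
    _ = ‖∑ k ∈ range (p.natDegree + 1), p.coeff k * (s.map (· ^ (m + k))).sum‖ := by
        rw [sum_coeff_mul_sum_map_pow, hp, norm_mul, norm_pow, RCLike.norm_natCast]
    _ ≤ ∑ k ∈ range (p.natDegree + 1), ‖p.coeff k‖ * (C * R ^ (m + k)) :=
        norm_sum_le_of_le _ fun k _ => by
          rw [norm_mul]
          gcongr
          exact hN _ (le_add_right hm)
    _ = (∑ k ∈ range (p.natDegree + 1), ‖p.coeff k‖ * (C * R ^ k)) * R ^ m := by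
        rw [sum_mul]
        exact sum_congr rfl fun k _ => by ring

theorem natCast_mul_neg_one_pow_mul_esymm {R : Type*} [CommRing R] (s : Multiset R) (n : ℕ) :
    n * ((-1) ^ n * s.esymm n) = ∑ a ∈ antidiagonal n,
      (-1) ^ a.1 * s.esymm a.1 * if a.2 = 0 then 0 else -(s.map (· ^ a.2)).sum := by
  classical
  have hpsum (k : ℕ) : ∑ x : s.ToType, (x : R) ^ k = (s.map (· ^ k)).sum :=
    congrArg Multiset.sum (s.map_univ (· ^ k))
  have hnewton := congrArg (MvPolynomial.aeval fun x : s.ToType => (x : R))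
    (MvPolynomial.mul_esymm_eq_sum s.ToType R n)
  simp only [map_mul, map_natCast, map_pow, map_neg, map_one, map_sum,
    MvPolynomial.aeval_esymm_eq_multiset_esymm, Multiset.map_univ_coe, MvPolynomial.psum,
    MvPolynomial.aeval_X, hpsum] at hnewton
  rw [mul_left_comm, hnewton, ← mul_assoc, ← pow_add, Odd.neg_one_pow ⟨n, by ring⟩, neg_one_mul,
    ← sum_neg_distrib, sum_filter]
  refine sum_congr rfl fun a ha => ?_
  have hlt : a.1 < n ↔ a.2 ≠ 0 := by
    have := mem_antidiagonal.1 ha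
    lia
  simp only [hlt, ite_not]
  split_ifs <;> ring

theorem eq_of_sum_antidiagonal_mul_eq {R : Type*} [CommRing R] {M S S' : ℕ → R} (hM : M 0 = 1)
    (h : ∀ n, ∑ a ∈ antidiagonal n, M a.1 * S a.2 = ∑ a ∈ antidiagonal n, M a.1 * S' a.2) :
    S = S' := by
  have hunit : IsUnit (PowerSeries.mk M) := by simp [PowerSeries.isUnit_iff_constantCoeff, hM]
  have hmul : PowerSeries.mk M * PowerSeries.mk S = PowerSeries.mk M * PowerSeries.mk S' := by
    ext n
    simpa [PowerSeries.coeff_mul] using h n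
  funext n
  simpa using congrArg (PowerSeries.coeff n) (hunit.mul_left_cancel hmul)

theorem exists_multiset_esymm_eq {F : Type*} [Field F] [IsAlgClosed F] {M : ℕ → F} {N : ℕ}
    (hM0 : M 0 = 1) (hM : ∀ n > N, M n = 0) :
    ∃ s : Multiset F, s.card = N ∧ ∀ n, (-1) ^ n * s.esymm n = M n := by
  classical
  set P : F[X] := ∑ i ∈ range (N + 1), C (M (N - i)) * X ^ i with hP
  have hcoeff (i) (hi : i ≤ N) : P.coeff i = M (N - i) := by
    simp [hP, Nat.lt_succ_of_le hi]
  have hdeg : P.natDegree = N := by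
    refine natDegree_eq_of_le_of_coeff_ne_zero ?_ ?_
    · exact natDegree_sum_le_of_forall_le _ _ fun i hi =>
        (natDegree_C_mul_X_pow_le _ _).trans (mem_range_succ_iff.1 hi)
    · rw [hcoeff N le_rfl]
      simp [hM0]
  have hsplits := IsAlgClosed.splits P
  have hcard : P.roots.card = N := by rw [splits_iff_card_roots.1 hsplits, hdeg]
  refine ⟨P.roots, hcard, fun n => ?_⟩
  rcases le_or_gt n N with hn | hn
  · have := coeff_eq_esymm_roots_of_splits hsplits (k := N - n) (by lia)
    rw [hcoeff _ (by lia), leadingCoeff, hdeg, hcoeff N le_rfl] at this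
    simpa [Nat.sub_sub_self hn, hM0] using this.symm
  · rw [hM n hn, Multiset.esymm, Multiset.powersetCard_eq_empty]
    · simp
    · lia

theorem exists_multiset_of_newton {F : Type*} [Field F] [IsAlgClosed F] {M S : ℕ → F} {N : ℕ}
    (hM0 : M 0 = 1) (hM : ∀ n > N, M n = 0)
    (hS : ∀ n, n * M n = ∑ a ∈ antidiagonal n, M a.1 * S a.2) :
    ∃ s : Multiset F, s.card = N ∧ ∀ n ≠ 0, S n = -(s.map (· ^ n)).sum := by
  obtain ⟨s, hs, hesymm⟩ := exists_multiset_esymm_eq hM0 hM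
  refine ⟨s, hs, fun n hn => ?_⟩
  have hS' : S = fun n => if n = 0 then 0 else -(s.map (· ^ n)).sum :=
    eq_of_sum_antidiagonal_mul_eq hM0 fun n => by
      rw [← hS, ← hesymm, natCast_mul_neg_one_pow_mul_esymm]
      simp only [hesymm]
  simp only [hS', if_neg hn]

theorem norm_le_of_newton {M S : ℕ → ℂ} {N : ℕ} (hM0 : M 0 = 1) (hM : ∀ n > N, M n = 0)
    (hS : ∀ n, n * M n = ∑ a ∈ antidiagonal n, M a.1 * S a.2) {q C : ℝ} (hq : 0 < q)
    (h : ∀ᶠ m in atTop, ‖S (2 * m)‖ ≤ C * q ^ m) : ‖S 1‖ ≤ N * √q := by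
  obtain ⟨s, hs, hSs⟩ := exists_multiset_of_newton hM0 hM hS
  have hsq (w) (hw : w ∈ s) : ‖w‖ ≤ √q := by
    refine Real.le_sqrt_of_sq_le ?_
    rw [← norm_pow]
    refine norm_le_of_norm_sum_map_pow_le hq (C := C) (s := s.map (· ^ 2)) ?_
      (Multiset.mem_map_of_mem _ hw)
    filter_upwards [h, eventually_gt_atTop 0] with m hm hm0
    rw [hSs _ (by lia), norm_neg] at hm
    simpa only [Multiset.map_map, Function.comp_def, ← pow_mul] using hm
  calc ‖S 1‖ = ‖s.sum‖ := by simp [hSs]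
    _ ≤ (s.map norm).sum := norm_multiset_sum_le s
    _ ≤ (s.map norm).card • √q := Multiset.sum_le_card_nsmul _ _ (by simpa using hsq)
    _ = N * √q := by rw [Multiset.card_map, hs, nsmul_eq_mul]

end PowerSums

section LFunction

open Polynomial UniqueFactorizationMonoid

theorem finite_setOf_natDegree_le (R : Type*) [Semiring R] [Finite R] (n : ℕ) :
    {g : R[X] | g.natDegree ≤ n}.Finite := by
  have : Finite (degreeLT R (n + 1)) := Finite.of_equiv _ (degreeLTEquiv R (n + 1)).symm.toEquiv
  refine (Set.toFinite (degreeLT R (n + 1) : Set R[X])).subset fun g hg => mem_degreeLT.2 ?_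
  exact degree_le_natDegree.trans_lt (by exact_mod_cast Nat.lt_succ_of_le hg)

/-- The finset of monic polynomials of degree `n` over a finite field. -/
noncomputable def monicsOfDegree (K : Type*) [Field K] [Finite K] (n : ℕ) : Finset K[X] :=
  Set.Finite.toFinset (s := {g : K[X] | g.Monic ∧ g.natDegree = n})
    ((finite_setOf_natDegree_le K n).subset fun _ hg => hg.2.le)

/-- The finset of monic irreducible polynomials of degree at most `n` over a finite field: the
primes that can divide a monic polynomial of degree `n`. -/
noncomputable def monicIrreduciblesUpTo (K : Type*) [Field K] [Finite K] (n : ℕ) : Finset K[X] :=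
  Set.Finite.toFinset (s := {g : K[X] | (g.Monic ∧ Irreducible g) ∧ g.natDegree ≤ n})
    ((finite_setOf_natDegree_le K n).subset fun _ hg => hg.2)

section EulerProduct

variable {K : Type*} [Field K] [Finite K] {n : ℕ} {g P : K[X]}

theorem mem_monicsOfDegree : g ∈ monicsOfDegree K n ↔ g.Monic ∧ g.natDegree = n :=
  Set.Finite.mem_toFinset _

theorem mem_monicIrreduciblesUpTo :
    P ∈ monicIrreduciblesUpTo K n ↔ (P.Monic ∧ Irreducible P) ∧ P.natDegree ≤ n :=
  Set.Finite.mem_toFinset _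

open scoped Classical in
theorem sum_natDegree_mul_count_normalizedFactors (hg : g ∈ monicsOfDegree K n) :
    ∑ P ∈ monicIrreduciblesUpTo K n, P.natDegree * (normalizedFactors g).count P = n := by
  obtain ⟨hgm, rfl⟩ := mem_monicsOfDegree.1 hg
  have hmonic (P) (hP : P ∈ normalizedFactors g) : P.Monic :=
    normalize_normalized_factor P hP ▸
      monic_normalize (irreducible_of_normalized_factor P hP).ne_zero
  have hsub : (normalizedFactors g).toFinset ⊆ monicIrreduciblesUpTo K g.natDegree := fun P hP => by
    rw [Multiset.mem_toFinset] at hP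
    exact mem_monicIrreduciblesUpTo.2 ⟨⟨hmonic P hP, irreducible_of_normalized_factor P hP⟩,
      natDegree_le_of_dvd (dvd_of_mem_normalizedFactors hP) hgm.ne_zero⟩
  calc _ = ∑ P ∈ (normalizedFactors g).toFinset, P.natDegree * (normalizedFactors g).count P :=
        (sum_subset hsub fun P _ hP => by
          rw [Multiset.count_eq_zero_of_notMem (Multiset.mem_toFinset.not.1 hP), mul_zero]).symm
    _ = ((normalizedFactors g).map natDegree).sum := by
        rw [Finset.sum_multiset_map_count]
        exact sum_congr rfl fun P _ => mul_comm _ _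
    _ = (normalizedFactors g).prod.natDegree := (natDegree_multiset_prod_of_monic _ hmonic).symm
    _ = g.natDegree := by rw [prod_normalizedFactors_eq hgm.ne_zero, hgm.normalize_eq_self]

open scoped Classical in
theorem card_filter_pow_dvd (hg : g ∈ monicsOfDegree K n) (hP : P ∈ monicIrreduciblesUpTo K n) :
    #{j ∈ range (n + 1) | j ≠ 0 ∧ P.natDegree ∣ j ∧ P ^ (j / P.natDegree) ∣ g} =
      (normalizedFactors g).count P := by
  obtain ⟨hgm, rfl⟩ := mem_monicsOfDegree.1 hg
  obtain ⟨⟨hPm, hPi⟩, -⟩ := mem_monicIrreduciblesUpTo.1 hP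
  have hpos := hPi.natDegree_pos
  have hdvd (r) : P ^ r ∣ g ↔ r ≤ (normalizedFactors g).count P := by
    rw [pow_dvd_iff_le_emultiplicity, emultiplicity_eq_count_normalizedFactors hPi hgm.ne_zero,
      hPm.normalize_eq_self, Nat.cast_le]
  rw [← Nat.add_sub_cancel ((normalizedFactors g).count P) 1, ← Nat.card_Icc]
  symm
  refine card_nbij (· * P.natDegree) (fun r hr => ?_)
    (fun a _ b _ h => Nat.eq_of_mul_eq_mul_right hpos h) fun j hj => ?_
  · obtain ⟨hr1, hr⟩ := mem_Icc.1 hr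
    have hle := natDegree_le_of_dvd ((hdvd r).2 hr) hgm.ne_zero
    rw [natDegree_pow] at hle
    rw [mem_coe, mem_filter, mem_range, Nat.mul_div_cancel _ hpos]
    exact ⟨by lia, (Nat.mul_pos hr1 hpos).ne', dvd_mul_left _ _, (hdvd r).2 hr⟩
  · obtain ⟨-, hj0, ⟨r, rfl⟩, hr⟩ := mem_filter.1 hj
    rw [Nat.mul_div_cancel_left _ hpos] at hr
    exact ⟨r, mem_Icc.2 ⟨Nat.pos_of_ne_zero (right_ne_zero_of_mul hj0), (hdvd r).1 hr⟩,
      mul_comm _ _⟩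

variable {R : Type*} [CommSemiring R]

/-- The sum of a completely multiplicative function `Λ` over the monic polynomials of degree `n`,
that is, the `n`-th coefficient of the `L`-function of `Λ`. -/
noncomputable def monicSum (Λ : K[X] →* R) (n : ℕ) : R := ∑ g ∈ monicsOfDegree K n, Λ g

/-- The sum of `deg P * Λ (P ^ r)` over the powers `P ^ r` of degree `n` of monic irreducible
polynomials, that is, the `n`-th coefficient of `T * L' / L` where `L` is the `L`-function
of `Λ`. -/
noncomputable def primePowerSum (Λ : K[X] →* R) (n : ℕ) : R :=
  ∑ P ∈ monicIrreduciblesUpTo K n with P.natDegree ∣ n, P.natDegree * Λ P ^ (n / P.natDegree)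

theorem monicSum_zero (Λ : K[X] →* R) : monicSum Λ 0 = 1 := by
  have : monicsOfDegree K 0 = {1} := by
    ext g
    rw [mem_monicsOfDegree, mem_singleton]
    exact ⟨fun h => h.1.natDegree_eq_zero.1 h.2, by rintro rfl; simp⟩
  rw [monicSum, this, sum_singleton, map_one]

theorem primePowerSum_eq_sum_ite (Λ : K[X] →* R) {j n : ℕ} (hj : j ≤ n) :
    primePowerSum Λ j = ∑ P ∈ monicIrreduciblesUpTo K n,
      if j ≠ 0 ∧ P.natDegree ∣ j then P.natDegree * Λ P ^ (j / P.natDegree) else 0 := by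
  rw [primePowerSum, ← sum_filter]
  refine sum_congr ?_ fun _ _ => rfl
  ext P
  simp only [mem_filter, mem_monicIrreduciblesUpTo]
  constructor
  · rintro ⟨⟨hP, hPj⟩, hdvd⟩
    exact ⟨⟨hP, hPj.trans hj⟩, (hP.2.natDegree_pos.trans_le hPj).ne', hdvd⟩
  · rintro ⟨⟨hP, -⟩, hj0, hdvd⟩
    exact ⟨⟨hP, Nat.le_of_dvd (Nat.pos_of_ne_zero hj0) hdvd⟩, hdvd⟩

open scoped Classical in
theorem map_mul_monicSum (Λ : K[X] →* R) {Q : K[X]} (hQ : Q.Monic) (hn : Q.natDegree ≤ n) :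
    Λ Q * monicSum Λ (n - Q.natDegree) = ∑ g ∈ monicsOfDegree K n, if Q ∣ g then Λ g else 0 := by
  rw [monicSum, mul_sum, ← sum_filter]
  refine sum_bij (fun h _ => Q * h) (fun h hh => ?_)
    (fun _ _ _ _ h => mul_left_cancel₀ hQ.ne_zero h) (fun g hg => ?_)
    fun h _ => (map_mul _ _ _).symm
  · obtain ⟨hhm, hh⟩ := mem_monicsOfDegree.1 hh
    exact mem_filter.2 ⟨mem_monicsOfDegree.2 ⟨hQ.mul hhm, by rw [hQ.natDegree_mul hhm]; lia⟩,
      dvd_mul_right _ _⟩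
  · obtain ⟨hg, h, rfl⟩ := mem_filter.1 hg
    obtain ⟨hgm, hg⟩ := mem_monicsOfDegree.1 hg
    have hhm : h.Monic := hQ.of_mul_monic_left hgm
    rw [hQ.natDegree_mul hhm] at hg
    exact ⟨h, mem_monicsOfDegree.2 ⟨hhm, by lia⟩, rfl⟩

open scoped Classical in
theorem monicSum_mul_primePowerSum (Λ : K[X] →* R) {j : ℕ} (hj : j ≤ n) :
    monicSum Λ (n - j) * primePowerSum Λ j =
      ∑ g ∈ monicsOfDegree K n, ∑ P ∈ monicIrreduciblesUpTo K n,
        if j ≠ 0 ∧ P.natDegree ∣ j ∧ P ^ (j / P.natDegree) ∣ g then P.natDegree * Λ g else 0 := by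
  rw [primePowerSum_eq_sum_ite Λ hj, mul_sum, sum_comm]
  refine sum_congr rfl fun P hP => ?_
  by_cases hPj : j ≠ 0 ∧ P.natDegree ∣ j
  · have hdeg : (P ^ (j / P.natDegree)).natDegree = j := by
      rw [natDegree_pow, Nat.div_mul_cancel hPj.2]
    have hmul := map_mul_monicSum Λ
      ((mem_monicIrreduciblesUpTo.1 hP).1.1.pow (j / P.natDegree)) (hdeg.trans_le hj)
    rw [hdeg, map_pow] at hmul
    simp only [hPj, ne_eq, not_false_eq_true, and_self, true_and, if_true]
    rw [mul_left_comm, mul_comm (monicSum _ _), hmul, mul_sum]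
    exact sum_congr rfl fun g _ => mul_ite_zero _ _ _
  · rw [if_neg hPj, mul_zero]
    exact (sum_eq_zero fun g _ => if_neg fun h => hPj ⟨h.1, h.2.1⟩).symm

/-- Newton's identities for the coefficients of an `L`-function, obtained by comparing degrees in
the factorisation of each monic polynomial of degree `n`. -/
theorem mul_monicSum_eq_sum_antidiagonal (Λ : K[X] →* R) (n : ℕ) :
    n * monicSum Λ n = ∑ a ∈ antidiagonal n, monicSum Λ a.1 * primePowerSum Λ a.2 := by
  classical
  rw [← Finset.Nat.sum_antidiagonal_swap]
  simp only [Prod.fst_swap, Prod.snd_swap]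
  rw [Finset.Nat.sum_antidiagonal_eq_sum_range_succ (fun j i => monicSum Λ i * primePowerSum Λ j),
    sum_congr rfl fun j hj => monicSum_mul_primePowerSum Λ (mem_range_succ_iff.1 hj), sum_comm,
    monicSum, mul_sum]
  refine sum_congr rfl fun g hg => ?_
  rw [sum_comm]
  conv_lhs => rw [← sum_natDegree_mul_count_normalizedFactors hg, Nat.cast_sum, sum_mul]
  refine sum_congr rfl fun P hP => ?_
  rw [← sum_filter, sum_const, ← card_filter_pow_dvd hg hP, nsmul_eq_mul]
  push_cast
  ring

end EulerProduct

section Minpoly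

variable {K E : Type*} [Field K] [Field E] [Algebra K E]

theorem card_filter_minpoly_eq [Finite K] [Fintype E] [DecidableEq K[X]] {P : K[X]}
    (hPm : P.Monic) (hPi : Irreducible P) (hdvd : P.natDegree ∣ Module.finrank K E) :
    #{γ : E | minpoly K γ = P} = P.natDegree := by
  classical
  have hcard : Nat.card K ^ Module.finrank K E = Fintype.card E := by
    rw [Fintype.card_eq_nat_card, Module.natCard_eq_pow_finrank (K := K) (V := E)]
  have hsplits : (P.map (algebraMap K E)).Splits := by
    have hX : (X ^ Fintype.card E - X : E[X]).Splits := by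
      simpa using (FiniteField.isSplittingField_sub E K).splits
    refine hX.of_dvd (FiniteField.X_pow_card_sub_X_ne_zero E Fintype.one_lt_card) ?_
    simpa [hcard] using map_dvd (algebraMap K E)
      (hPi.natDegree_dvd_iff_dvd_X_pow_card_pow_sub_X.1 hdvd)
  rw [← card_rootSet_eq_natDegree (PerfectField.separable_of_irreducible hPi) hsplits,
    ← Set.toFinset_card]
  congr 1
  ext γ
  rw [mem_filter_univ, Set.mem_toFinset, mem_rootSet_of_ne hPi.ne_zero]
  exact ⟨fun h => h ▸ minpoly.aeval K γ,
    fun h => (minpoly.eq_of_irreducible_of_monic hPi h hPm).symm⟩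

theorem sum_apply_minpoly [Finite K] [Fintype E] {R : Type*} [Semiring R] (Φ : K[X] → R) :
    ∑ γ : E, Φ (minpoly K γ) = ∑ P ∈ monicIrreduciblesUpTo K (Module.finrank K E)
      with P.natDegree ∣ Module.finrank K E, P.natDegree * Φ P := by
  classical
  have hKγ (γ : E) : IsIntegral K γ := Algebra.IsIntegral.isIntegral γ
  have hmaps (γ : E) (_ : γ ∈ univ) : minpoly K γ ∈
      {P ∈ monicIrreduciblesUpTo K (Module.finrank K E) | P.natDegree ∣ Module.finrank K E} :=
    mem_filter.2 ⟨mem_monicIrreduciblesUpTo.2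
      ⟨⟨minpoly.monic (hKγ γ), minpoly.irreducible (hKγ γ)⟩, minpoly.natDegree_le γ⟩,
      minpoly.degree_dvd (hKγ γ)⟩
  rw [← sum_fiberwise_of_maps_to hmaps]
  refine sum_congr rfl fun P hP => ?_
  obtain ⟨hP, hdvd⟩ := mem_filter.1 hP
  obtain ⟨⟨hPm, hPi⟩, -⟩ := mem_monicIrreduciblesUpTo.1 hP
  rw [sum_congr rfl fun γ hγ => by rw [(mem_filter.1 hγ).2], sum_const, nsmul_eq_mul,
    card_filter_minpoly_eq hPm hPi hdvd]

theorem norm_eq_coeff_zero_minpoly_pow [FiniteDimensional K E] (γ : E) :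
    Algebra.norm K γ = ((-1) ^ (minpoly K γ).natDegree * (minpoly K γ).coeff 0) ^
      (Module.finrank K E / (minpoly K γ).natDegree) := by
  have hKγ : IsIntegral K γ := Algebra.IsIntegral.isIntegral γ
  have hgen := Algebra.PowerBasis.norm_gen_eq_coeff_zero_minpoly
    (IntermediateField.adjoin.powerBasis hKγ)
  rw [IntermediateField.adjoin.powerBasis_gen, IntermediateField.minpoly_gen,
    ← PowerBasis.finrank, IntermediateField.adjoin.finrank hKγ] at hgen
  rw [Algebra.norm_eq_norm_adjoin K γ, hgen,
    ← Module.finrank_mul_finrank K (IntermediateField.adjoin K {γ}) E,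
    IntermediateField.adjoin.finrank hKγ, Nat.mul_div_cancel_left _ (minpoly.natDegree_pos hKγ)]

theorem norm_algebraMap_sub [FiniteDimensional K E] (a : K) (γ : E) :
    Algebra.norm K (algebraMap K E a - γ) =
      (minpoly K γ).eval a ^ (Module.finrank K E / (minpoly K γ).natDegree) := by
  have hcomp : minpoly K (γ - algebraMap K E a) = (minpoly K γ).comp (X + C a) :=
    minpoly.sub_algebraMap γ a
  have hdeg : (minpoly K (γ - algebraMap K E a)).natDegree = (minpoly K γ).natDegree := by
    rw [hcomp, natDegree_comp, natDegree_X_add_C, mul_one]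
  have hcoeff : (minpoly K (γ - algebraMap K E a)).coeff 0 = (minpoly K γ).eval a := by
    rw [hcomp, coeff_zero_eq_eval_zero, eval_comp, eval_add, eval_X, eval_C, zero_add]
  have hneg_one : Algebra.norm K (-1 : E) = (-1) ^ Module.finrank K E := by
    simpa using Algebra.norm_algebraMap (S := E) (-1 : K)
  rw [← neg_sub, ← neg_one_mul, map_mul, hneg_one, norm_eq_coeff_zero_minpoly_pow, hdeg, hcoeff,
    mul_pow, ← pow_mul, Nat.mul_div_cancel' (minpoly.degree_dvd (Algebra.IsIntegral.isIntegral γ)),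
    ← mul_assoc, ← mul_pow, neg_one_mul, neg_neg, one_pow, one_mul]

end Minpoly

section EvalCharProd

variable {K : Type*} [Field K] {R : Type*} [CommRing R]

/-- The completely multiplicative function `g ↦ ∏ χ (g (-a)) ^ e a` on polynomials. The nodes are
negated so that `X + b ↦ ∏ χ (b - a) ^ e a`. -/
def evalCharProd (s : Finset K) (e : K → ℕ) (χ : MulChar K R) : K[X] →* R where
  toFun g := ∏ a ∈ s, χ (g.eval (-a)) ^ e a
  map_one' := by simp
  map_mul' g h := by simp [mul_pow, prod_mul_distrib]

variable (s : Finset K) (e : K → ℕ) (χ : MulChar K R)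

theorem evalCharProd_apply (g : K[X]) :
    evalCharProd s e χ g = ∏ a ∈ s, χ (g.eval (-a)) ^ e a := rfl

theorem sum_mulChar_norm_aeval_eq_primePowerSum [Finite K] (E : Type*) [Field E] [Fintype E]
    [Algebra K E] :
    ∑ γ : E, χ (Algebra.norm K (aeval γ (∏ a ∈ s, (X - C a) ^ e a))) =
      primePowerSum (evalCharProd s e χ) (Module.finrank K E) := by
  rw [← Equiv.sum_comp (Equiv.neg E), primePowerSum, ← sum_apply_minpoly (E := E) fun P =>
    evalCharProd s e χ P ^ (Module.finrank K E / P.natDegree)]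
  refine sum_congr rfl fun γ _ => ?_
  rw [evalCharProd_apply, ← prod_pow]
  simp only [Equiv.neg_apply, map_prod, map_pow, map_sub, aeval_X, aeval_C]
  refine prod_congr rfl fun a _ => ?_
  rw [← neg_add_eq_sub (algebraMap K E a), ← sub_eq_add_neg, ← map_neg, norm_algebraMap_sub,
    map_pow, pow_right_comm]

theorem monicSum_eq_zero_of_sum_add_C_mul [Fintype K] [IsDomain R] [CharZero R] {Λ : K[X] →* R}
    {h : K[X]} {n : ℕ} (hn : h.natDegree < n) (hsum : ∀ g, ∑ c, Λ (g + C c * h) = 0) :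
    monicSum Λ n = 0 := by
  have hmem (c : K) {g : K[X]} (hg : g ∈ monicsOfDegree K n) :
      g + C c * h ∈ monicsOfDegree K n := by
    obtain ⟨hgm, rfl⟩ := mem_monicsOfDegree.1 hg
    have hlt : (C c * h).natDegree < g.natDegree := (natDegree_C_mul_le c h).trans_lt hn
    exact mem_monicsOfDegree.2 ⟨hgm.add_of_left (degree_lt_degree hlt),
      natDegree_add_eq_left_of_natDegree_lt hlt⟩
  have hshift (c : K) : ∑ g ∈ monicsOfDegree K n, Λ (g + C c * h) = monicSum Λ n :=
    sum_nbij' (· + C c * h) (· + C (-c) * h) (fun _ => hmem c) (fun _ => hmem (-c))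
      (by simp) (by simp) fun _ _ => rfl
  have hcard : (Fintype.card K : R) * monicSum Λ n = 0 := by
    rw [← card_univ, ← nsmul_eq_mul, ← sum_const, ← sum_congr rfl fun c _ => hshift c, sum_comm]
    exact sum_eq_zero fun g _ => hsum g
  exact (mul_eq_zero.1 hcard).resolve_left (Nat.cast_ne_zero.2 Fintype.card_ne_zero)

variable {s e χ}

theorem sum_evalCharProd_add_C_mul_basis [Fintype K] [IsDomain R] [DecidableEq K] {a : K}
    (ha : a ∈ s) (hχ : χ ^ e a ≠ 1) (g : K[X]) :
    ∑ c, evalCharProd s e χ (g + C c * Lagrange.basis s (- ·) a) = 0 := by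
  have hea : e a ≠ 0 := fun h => hχ (by rw [h, pow_zero])
  have hfactor (c : K) : evalCharProd s e χ (g + C c * Lagrange.basis s (- ·) a) =
      (∏ b ∈ s.erase a, χ (g.eval (-b)) ^ e b) * (χ ^ e a) (g.eval (-a) + c) := by
    rw [evalCharProd_apply, ← prod_erase_mul _ _ ha, MulChar.pow_apply' _ hea, eval_add, eval_mul,
      eval_C, Lagrange.eval_basis_self neg_injective.injOn ha, mul_one]
    congr 1
    refine prod_congr rfl fun b hb => ?_
    obtain ⟨hba, hb⟩ := mem_erase.1 hb
    rw [eval_add, eval_mul, Lagrange.eval_basis_of_ne hba.symm hb, mul_zero, add_zero]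
  have htranslate : ∑ c, (χ ^ e a) (g.eval (-a) + c) = ∑ x, (χ ^ e a) x :=
    Equiv.sum_comp (Equiv.addLeft (g.eval (-a))) _
  rw [sum_congr rfl fun c _ => hfactor c, ← mul_sum, htranslate,
    MulChar.sum_eq_zero_of_ne_one hχ, mul_zero]

theorem monicSum_evalCharProd_eq_zero [Finite K] [IsDomain R] [CharZero R] {a : K}
    (ha : a ∈ s) (hχ : χ ^ e a ≠ 1) {n : ℕ} (hn : #s ≤ n) :
    monicSum (evalCharProd s e χ) n = 0 := by
  classical
  cases nonempty_fintype K
  have hdeg : (Lagrange.basis s (- ·) a).natDegree = #s - 1 :=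
    Lagrange.natDegree_basis neg_injective.injOn ha
  have := card_pos.2 ⟨a, ha⟩
  exact monicSum_eq_zero_of_sum_add_C_mul (by lia) (sum_evalCharProd_add_C_mul_basis ha hχ)

end EvalCharProd

end LFunction

section WeilBound

open Polynomial Filter

theorem rootMultiplicity_prod_X_sub_C_pow {R : Type*} [CommRing R] [IsDomain R] {s : Finset R}
    (e : R → ℕ) {a : R} (ha : a ∈ s) :
    (∏ b ∈ s, (X - C b) ^ e b).rootMultiplicity a = e a := by
  classical
  have hne (b : R) : (X - C b) ^ e b ≠ 0 := pow_ne_zero _ (X_sub_C_ne_zero b)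
  rw [← count_roots, roots_prod _ _ (prod_ne_zero_iff.2 fun b _ => hne b), Multiset.count_bind]
  simp [Multiset.count_singleton, ha]

variable {K : Type*} [Field K] [Fintype K] {χ : MulChar K ℂ} {s : Finset K} {e : K → ℕ}

theorem eventually_norm_primePowerSum_le (hχ : χ ≠ 1)
    (he : ∀ r, r ∣ orderOf χ → (∀ a ∈ s, r ∣ e a) → r = 1) :
    ∃ C : ℝ, ∀ᶠ m in atTop,
      ‖primePowerSum (evalCharProd s e χ) (2 * m)‖ ≤ C * (Fintype.card K : ℝ) ^ m := by
  set f : K[X] := ∏ a ∈ s, (X - C a) ^ e a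
  have hf0 : f ≠ 0 := prod_ne_zero_iff.2 fun a _ => pow_ne_zero _ (X_sub_C_ne_zero a)
  have hf (r) (hr : r ∣ orderOf χ) (hrf : ∀ α, r ∣ f.rootMultiplicity α) : r = 1 :=
    he r hr fun a ha => rootMultiplicity_prod_X_sub_C_pow e ha ▸ hrf a
  refine ⟨orderOf χ * (3 * f.natDegree + 1) + f.natDegree, ?_⟩
  filter_upwards [eventually_gt_atTop (2 * f.natDegree * orderOf χ + 1)] with m hm
  obtain ⟨p, hp⟩ := CharP.exists K
  have : Fact p.Prime := ⟨CharP.char_is_prime K p⟩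
  have : NeZero (2 * m) := ⟨by lia⟩
  let : Fintype (FiniteField.Extension K p (2 * m)) := Fintype.ofFinite _
  have hcard : Fintype.card (FiniteField.Extension K p (2 * m)) = (Fintype.card K ^ m) ^ 2 := by
    rw [Fintype.card_eq_nat_card, FiniteField.natCard_extension, ← Fintype.card_eq_nat_card,
      ← pow_mul, mul_comm]
  have hsum := sum_mulChar_norm_aeval_eq_primePowerSum s e χ (FiniteField.Extension K p (2 * m))
  rw [FiniteField.finrank_extension] at hsum
  rw [← hsum, ← Nat.cast_pow]
  exact norm_sum_mulChar_norm_aeval_le hχ hf0 hf rfl hcard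
    (hm.trans (Nat.lt_pow_self Fintype.one_lt_card))

theorem norm_sum_prod_mulChar_sub_pow_le_of_coprime (hχ : χ ≠ 1)
    (he : ∀ r, r ∣ orderOf χ → (∀ a ∈ s, r ∣ e a) → r = 1) :
    ‖∑ γ, ∏ a ∈ s, χ (γ - a) ^ e a‖ ≤ (#s - 1) * √(Fintype.card K) := by
  obtain ⟨a, ha, hχa⟩ : ∃ a ∈ s, χ ^ e a ≠ 1 := by
    by_contra! h
    exact hχ (orderOf_eq_one_iff.1 (he _ dvd_rfl fun a ha => orderOf_dvd_of_pow_eq_one (h a ha)))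
  have hs : 0 < #s := card_pos.2 ⟨a, ha⟩
  have hS : ∑ γ, ∏ a ∈ s, χ (γ - a) ^ e a = primePowerSum (evalCharProd s e χ) 1 := by
    rw [← Module.finrank_self K, ← sum_mulChar_norm_aeval_eq_primePowerSum]
    simp [Algebra.norm_self]
  obtain ⟨C, hC⟩ := eventually_norm_primePowerSum_le hχ he
  rw [hS, ← Nat.cast_pred hs]
  exact norm_le_of_newton (monicSum_zero _)
    (fun n hn => monicSum_evalCharProd_eq_zero ha hχa (by lia)) (mul_monicSum_eq_sum_antidiagonal _)
    (Nat.cast_pos.2 Fintype.card_pos) hC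

/-- Weil's bound for multiplicative character sums of split polynomials. -/
theorem norm_sum_prod_mulChar_sub_pow_le {a : K} (ha : a ∈ s) (hχ : χ ^ e a ≠ 1) :
    ‖∑ γ, ∏ a ∈ s, χ (γ - a) ^ e a‖ ≤ (#s - 1) * √(Fintype.card K) := by
  set δ := Nat.gcd (orderOf χ) (s.gcd e)
  have hδ : δ ≠ 0 := Nat.gcd_ne_zero_left χ.orderOf_pos.ne'
  have hδd : δ ∣ orderOf χ := Nat.gcd_dvd_left _ _
  have hδe (b) (hb : b ∈ s) : δ ∣ e b := (Nat.gcd_dvd_right _ _).trans (gcd_dvd hb)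
  have hψ : χ ^ δ ≠ 1 := fun h => hχ (by
    obtain ⟨k, hk⟩ := hδe a ha
    rw [hk, pow_mul, h, one_pow])
  have hcoprime (r) (hr : r ∣ orderOf (χ ^ δ)) (hre : ∀ b ∈ s, r ∣ e b / δ) : r = 1 := by
    rw [orderOf_pow_of_dvd hδ hδd] at hr
    have hdvd : δ * r ∣ δ * 1 := by
      rw [mul_one]
      exact Nat.dvd_gcd ((Nat.dvd_div_iff_mul_dvd hδd).1 hr)
        (dvd_gcd fun b hb => (Nat.dvd_div_iff_mul_dvd (hδe b hb)).1 (hre b hb))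
    exact Nat.dvd_one.1 (Nat.dvd_of_mul_dvd_mul_left (Nat.pos_of_ne_zero hδ) hdvd)
  have hprod (γ : K) : ∏ b ∈ s, χ (γ - b) ^ e b = ∏ b ∈ s, (χ ^ δ) (γ - b) ^ (e b / δ) :=
    prod_congr rfl fun b hb => by
      rw [MulChar.pow_apply' _ hδ, ← pow_mul, Nat.mul_div_cancel' (hδe b hb)]
  simp only [hprod]
  exact norm_sum_prod_mulChar_sub_pow_le_of_coprime hψ hcoprime

end WeilBound

section SubsetExpansion

theorem norm_mulChar_le_one {F : Type*} [Field F] [Finite F] (χ : MulChar F ℂ) (x : F) :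
    ‖χ x‖ ≤ 1 := by
  rcases eq_or_ne x 0 with rfl | hx
  · rw [MulChar.map_zero, norm_zero]
    exact zero_le_one
  · exact (Complex.norm_eq_one_of_pow_eq_one (mulChar_pow_orderOf_eq_one χ hx.isUnit)
      χ.orderOf_pos.ne').le

theorem sum_Icc_pow_im_eq_zero {z : ℂ} {d : ℕ} (hd : 0 < d) (hz : z ^ d = 1) :
    (∑ j ∈ Icc 1 (d - 1), z ^ j).im = 0 := by
  rcases eq_or_ne z 1 with rfl | hz1
  · simp
  · obtain ⟨n, rfl⟩ := Nat.exists_eq_add_of_lt hd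
    rw [zero_add] at hz ⊢
    have hgeom : ∑ j ∈ range (n + 1), z ^ j = 0 := by
      rw [geom_sum_eq hz1, hz, sub_self, zero_div]
    have hsum : ∑ j ∈ Icc 1 n, z ^ j = -1 := by
      rw [eq_neg_iff_add_eq_zero, ← hgeom, range_eq_Ico, sum_eq_sum_Ico_succ_bot n.succ_pos,
        pow_zero, add_comm, zero_add, Nat.succ_eq_add_one, Ico_add_one_right_eq_Icc]
    rw [Nat.add_sub_cancel, hsum, Complex.neg_im, Complex.one_im, neg_zero]

/-- The sum `∑_{0 < j < d} χ(x ^ j)`, where `d` is the order of `χ`. This sum is a real number, and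
the definition takes its real part. -/
noncomputable def sumMulCharPow {F : Type*} [Field F] (χ : MulChar F ℂ) (x : F) : ℝ :=
  (∑ j ∈ Icc 1 (orderOf χ - 1), χ (x ^ j)).re

section

variable {F : Type*} [Field F]

theorem sumMulCharPow_zero (χ : MulChar F ℂ) : sumMulCharPow χ 0 = 0 := by
  rw [sumMulCharPow, sum_eq_zero, Complex.zero_re]
  intro j hj
  rw [zero_pow (Nat.one_le_iff_ne_zero.1 (mem_Icc.1 hj).1), MulChar.map_zero]

theorem coe_sumMulCharPow [Finite F] (χ : MulChar F ℂ) (x : F) :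
    (sumMulCharPow χ x : ℂ) = ∑ j ∈ Icc 1 (orderOf χ - 1), χ (x ^ j) := by
  refine Complex.ext (Complex.ofReal_re _) ?_
  rw [Complex.ofReal_im]
  simp only [map_pow]
  rcases eq_or_ne x 0 with rfl | hx
  · rw [MulChar.map_zero, sum_eq_zero, Complex.zero_im]
    exact fun j hj => zero_pow (Nat.one_le_iff_ne_zero.1 (mem_Icc.1 hj).1)
  · exact (sum_Icc_pow_im_eq_zero χ.orderOf_pos (mulChar_pow_orderOf_eq_one χ hx.isUnit)).symm

theorem abs_sumMulCharPow_le [Finite F] (χ : MulChar F ℂ) (x : F) :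
    |sumMulCharPow χ x| ≤ orderOf χ - 1 := by
  rw [← Real.norm_eq_abs, ← Complex.norm_real, coe_sumMulCharPow, ← Nat.cast_pred χ.orderOf_pos]
  refine (norm_sum_le_of_le _ fun j _ => norm_mulChar_le_one χ (x ^ j)).trans_eq ?_
  simp

theorem abs_sum_prod_sumMulCharPow_le [Fintype F] (χ : MulChar F ℂ) {B : Finset F}
    (hB : B.Nonempty) :
    |∑ γ, ∏ α ∈ B, sumMulCharPow χ (γ - α)| ≤
      (orderOf χ - 1) ^ #B * ((#B - 1) * √(Fintype.card F)) := by
  classical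
  rw [← Real.norm_eq_abs, ← Complex.norm_real, ← Nat.cast_pred χ.orderOf_pos]
  push_cast
  simp only [coe_sumMulCharPow, prod_sum]
  rw [sum_comm]
  have hcard : #(B.pi fun _ => Icc 1 (orderOf χ - 1)) = (orderOf χ - 1) ^ #B := by simp
  refine (norm_sum_le_of_le _ fun p hp => ?_).trans_eq
    (by rw [sum_const, hcard, nsmul_eq_mul, Nat.cast_pow])
  obtain ⟨β, hβ⟩ := hB
  let e (α : F) : ℕ := if h : α ∈ B then p α h else 0
  have he (α) (h : α ∈ B) : e α = p α h := dif_pos h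
  have hχ : χ ^ e β ≠ 1 := by
    have := mem_Icc.1 (mem_pi.1 hp β hβ)
    rw [he β hβ]
    exact pow_ne_one_of_lt_orderOf (by lia) (by have := χ.orderOf_pos; lia)
  have hprod (γ : F) :
      ∏ α ∈ B.attach, χ ((γ - α) ^ p α α.2) = ∏ α ∈ B, χ (γ - α) ^ e α := by
    rw [← prod_attach B]
    exact prod_congr rfl fun α _ => by rw [he α α.2, map_pow]
  simp only [hprod]
  exact norm_sum_prod_mulChar_sub_pow_le hβ hχ

end

theorem abs_sum_sdiff_le {ι : Type*} [Fintype ι] [DecidableEq ι] {f : ι → ℝ} {A B : Finset ι}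
    (hBA : B ⊆ A) (hf : ∀ i ∈ B, f i = 0) {M : ℝ} (hM : ∀ i, |f i| ≤ M) :
    |∑ i ∈ univ \ A, f i| ≤ |∑ i, f i| + (#A - #B) * M := by
  have hsplit : ∑ i ∈ univ \ A, f i = ∑ i, f i - ∑ i ∈ A \ B, f i := by
    rw [← sum_sdiff (subset_univ A), ← sum_sdiff hBA, sum_eq_zero hf]
    ring
  have hrest : |∑ i ∈ A \ B, f i| ≤ (#A - #B) * M := by
    refine (abs_sum_le_sum_abs _ _).trans ((sum_le_card_nsmul _ _ _ fun i _ => hM i).trans_eq ?_)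
    rw [nsmul_eq_mul, cast_card_sdiff hBA]
  rw [hsplit]
  exact (abs_sub _ _).trans (add_le_add_right hrest _)

theorem sum_powerset_card {ι : Type*} (A : Finset ι) :
    ∑ B ∈ A.powerset, #B = #A * 2 ^ (#A - 1) := by
  rw [sum_powerset_apply_card fun k => k, ← Nat.sum_range_mul_choose]
  simp [mul_comm]

theorem sum_powerset_linear {ι : Type*} {A : Finset ι} (hA : A.Nonempty) (Q : ℝ) :
    ∑ B ∈ A.powerset, ((#B - 1) * Q + (#A - #B)) =
      2 ^ (#A - 1) * (#A - 2) * Q + 2 ^ (#A - 1) * #A := by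
  have hcard : ∑ B ∈ A.powerset, (#B : ℝ) = #A * 2 ^ (#A - 1) := by
    exact_mod_cast sum_powerset_card A
  have hpow : (2 : ℝ) ^ #A = 2 * 2 ^ (#A - 1) := by
    rw [← pow_succ', Nat.sub_add_cancel hA.card_pos]
  calc ∑ B ∈ A.powerset, ((#B - 1) * Q + (#A - #B))
      = ∑ B ∈ A.powerset, ((Q - 1) * #B + (#A - Q)) := sum_congr rfl fun B _ => by ring
    _ = (Q - 1) * (#A * 2 ^ (#A - 1)) + 2 ^ #A * (#A - Q) := by
      rw [sum_add_distrib, ← mul_sum, hcard, sum_const, card_powerset, nsmul_eq_mul]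
      push_cast
      rfl
    _ = 2 ^ (#A - 1) * (#A - 2) * Q + 2 ^ (#A - 1) * #A := by rw [hpow]; ring

theorem prod_const_sub {ι : Type*} (A : Finset ι) (c : ℝ) (f : ι → ℝ) :
    ∏ i ∈ A, (c - f i) = ∑ B ∈ A.powerset, (-1) ^ #B * c ^ (#A - #B) * ∏ i ∈ B, f i := by
  classical
  rw [prod_sub]
  refine sum_congr rfl fun B hB => ?_
  rw [prod_const, card_sdiff_of_subset (mem_powerset.1 hB)]

theorem abs_sum_sdiff_prod_sub_le {G : Type*} [AddGroup G] [Fintype G] [DecidableEq G]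
    {A B : Finset G} (hBA : B ⊆ A) {t : G → ℝ} {c Q : ℝ} (ht0 : t 0 = 0) (ht : ∀ x, |t x| ≤ c)
    (hsum : |∑ γ, ∏ α ∈ B, t (γ - α)| ≤ c ^ #B * ((#B - 1) * Q)) :
    |∑ γ ∈ univ \ A, ∏ α ∈ B, t (γ - α)| ≤ c ^ #B * ((#B - 1) * Q + (#A - #B)) := by
  have hvanish (γ) (hγ : γ ∈ B) : ∏ α ∈ B, t (γ - α) = 0 :=
    prod_eq_zero hγ (by rw [sub_self, ht0])
  have hbound (γ) : |∏ α ∈ B, t (γ - α)| ≤ c ^ #B := by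
    rw [abs_prod, ← prod_const]
    exact prod_le_prod (fun _ _ => abs_nonneg _) fun α _ => ht _
  linarith [abs_sum_sdiff_le hBA hvanish hbound]

theorem le_sum_sdiff_prod_const_sub {G : Type*} [AddGroup G] [Fintype G] [DecidableEq G]
    {A : Finset G} (hA : A.Nonempty) {t : G → ℝ} {c Q : ℝ} (hc : 0 ≤ c) (ht0 : t 0 = 0)
    (ht : ∀ x, |t x| ≤ c)
    (hsum : ∀ B : Finset G, B.Nonempty → |∑ γ, ∏ α ∈ B, t (γ - α)| ≤ c ^ #B * ((#B - 1) * Q)) :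
    c ^ #A * (Fintype.card G - (2 ^ (#A - 1) * (#A - 2) + 1) * Q - 2 ^ (#A - 1) * #A) ≤
      ∑ γ ∈ univ \ A, ∏ α ∈ A, (c - t (γ - α)) := by
  set W : Finset G → ℝ := fun B => ∑ γ ∈ univ \ A, ∏ α ∈ B, t (γ - α)
  set b : Finset G → ℝ := fun B => (#B - 1) * Q + (#A - #B)
  have hterm (B) (hB : B ∈ A.powerset) :
      c ^ #A * ((if B = ∅ then Fintype.card G - Q else 0) - b B) ≤
        (-1) ^ #B * c ^ (#A - #B) * W B := by
    have hBA := mem_powerset.1 hB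
    rcases B.eq_empty_or_nonempty with rfl | hne
    · have hW0 : W ∅ = Fintype.card G - #A := by
        simp only [W, prod_empty, sum_const, nsmul_eq_mul, mul_one]
        rw [cast_card_sdiff (subset_univ A), card_univ]
      rw [hW0, if_pos rfl, card_empty, Nat.sub_zero, pow_zero, one_mul]
      simp only [b, card_empty, Nat.cast_zero]
      exact (by ring : _ = _).le
    · rw [if_neg hne.ne_empty, zero_sub, mul_neg]
      refine neg_le_of_abs_le ?_
      rw [abs_mul, abs_mul, abs_neg_one_pow, one_mul, abs_of_nonneg (pow_nonneg hc _)]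
      calc c ^ (#A - #B) * |W B| ≤ c ^ (#A - #B) * (c ^ #B * b B) :=
            mul_le_mul_of_nonneg_left (abs_sum_sdiff_prod_sub_le hBA ht0 ht (hsum B hne))
              (pow_nonneg hc _)
        _ = c ^ #A * b B := by
          rw [← mul_assoc, ← pow_add, Nat.sub_add_cancel (card_le_card hBA)]
  calc c ^ #A * (Fintype.card G - (2 ^ (#A - 1) * (#A - 2) + 1) * Q - 2 ^ (#A - 1) * #A)
      = ∑ B ∈ A.powerset, c ^ #A * ((if B = ∅ then Fintype.card G - Q else 0) - b B) := by
        rw [← mul_sum, sum_sub_distrib, sum_ite_eq', if_pos (empty_mem_powerset A),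
          sum_powerset_linear hA]
        ring
    _ ≤ ∑ B ∈ A.powerset, (-1) ^ #B * c ^ (#A - #B) * W B := sum_le_sum hterm
    _ = ∑ γ ∈ univ \ A, ∏ α ∈ A, (c - t (γ - α)) := by
        simp only [prod_const_sub, W, mul_sum]
        exact sum_comm

theorem char_sum_S_lower_bound_general {F : Type*} [Field F] [Fintype F] [DecidableEq F]
    {A : Finset F} (hA : A.Nonempty) (χ : MulChar F ℂ) :
    (∑ γ ∈ univ \ A, ∏ α ∈ A,
        ((orderOf χ : ℂ) - 1 - ∑ j ∈ Icc 1 (orderOf χ - 1), χ ((γ - α) ^ j))).im = 0 ∧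
      ((orderOf χ : ℝ) - 1) ^ #A *
          (Fintype.card F - (2 ^ (#A - 1) * (#A - 2) + 1) * √(Fintype.card F) -
            2 ^ (#A - 1) * #A) ≤
        (∑ γ ∈ univ \ A, ∏ α ∈ A,
          ((orderOf χ : ℂ) - 1 - ∑ j ∈ Icc 1 (orderOf χ - 1), χ ((γ - α) ^ j))).re := by
  have hreal : ∑ γ ∈ univ \ A, ∏ α ∈ A,
        ((orderOf χ : ℂ) - 1 - ∑ j ∈ Icc 1 (orderOf χ - 1), χ ((γ - α) ^ j)) =
      ((∑ γ ∈ univ \ A, ∏ α ∈ A, (orderOf χ - 1 - sumMulCharPow χ (γ - α)) : ℝ) : ℂ) := by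
    push_cast
    simp only [coe_sumMulCharPow]
  have hd : (1 : ℝ) ≤ orderOf χ := Nat.one_le_cast.2 χ.orderOf_pos
  rw [hreal, Complex.ofReal_im, Complex.ofReal_re]
  exact ⟨rfl, le_sum_sdiff_prod_const_sub hA (sub_nonneg.2 hd) (sumMulCharPow_zero χ)
    (abs_sumMulCharPow_le χ) fun B => abs_sum_prod_sumMulCharPow_le χ⟩

end SubsetExpansion

/-- For a subset `A` of the finite field with `q` elements with `|A| ≥ 2`, an integer
`2 ≤ d ≤ |A|` dividing `q - 1`, and a multiplicative character `χ` of order `d`, the sum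
`S(d; q, A) = ∑_{γ ∈ F_q \ A} ∏_{α ∈ A} ((d-1) - ∑_{j=1}^{d-1} χ((γ-α)^j))` is real and
satisfies `S(d; q, A) ≥ (d-1)^{|A|} (q - (2^{|A|-1}(|A|-2) + 1)√q - 2^{|A|} |A|)`. -/
theorem char_sum_S_lower_bound
    (q d : ℕ) (hq : IsPrimePow q)
    (F : Type*) [Field F] [Fintype F] [DecidableEq F] (hF : Fintype.card F = q)
    (A : Finset F) (hA : 2 ≤ A.card) (hd2 : 2 ≤ d) (hdA : d ≤ A.card) (hdvd : d ∣ q - 1)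
    (χ : MulChar F ℂ) (hχ : orderOf χ = d) :
    (∑ γ ∈ univ \ A, ∏ α ∈ A,
        (((d : ℂ) - 1) - ∑ j ∈ Finset.Icc 1 (d - 1), χ ((γ - α) ^ j))).im = 0 ∧
      ((d : ℝ) - 1) ^ A.card *
          ((q : ℝ) - (2 ^ (A.card - 1) * ((A.card : ℝ) - 2) + 1) * Real.sqrt q -
            2 ^ A.card * A.card) ≤
        (∑ γ ∈ univ \ A, ∏ α ∈ A,
          (((d : ℂ) - 1) - ∑ j ∈ Finset.Icc 1 (d - 1), χ ((γ - α) ^ j))).re := by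
  subst hF hχ
  have hd : (0 : ℝ) ≤ orderOf χ - 1 := sub_nonneg.2 (Nat.one_le_cast.2 χ.orderOf_pos)
  obtain ⟨him, hre⟩ := char_sum_S_lower_bound_general (card_pos.1 (by lia : 0 < #A)) χ
  refine ⟨him, le_trans ?_ hre⟩
  gcongr <;> norm_num
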